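/- Let n ≥ 2 and suppose Λ is a critical lattice of the unit ball B^n which is unique up to rotation, i.e., every critical lattice of B^n equals UΛ for some orthogonal map U (necessarily m(Λ) = 1, so S(Λ) lies on the unit sphere). Then B^n is reducible—that is, there exists an origin-symmetric convex body K properly contained in B^n with d_K = d_{B^n}—if and only if the configuration S(Λ) is redundantly extreme. -/

import Mathlib

open scoped RealInnerProductSpace
open Metric MeasureTheory

noncomputable section

abbrev Euc (n : ℕ) := EuclideanSpace ℝ (Fin n)

/-- The rank-one symmetric map `P_x : y ↦ ⟪y, x⟫ • x`. -/
def projMap {F : Type*} [NormedAddCommGroup F] [InnerProductSpace ℝ F] (x : F) :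
    F →ₗ[ℝ] F where
  toFun y := (⟪y, x⟫) • x
  map_add' y z := by simp [inner_add_left, add_smul]
  map_smul' c y := by simp [real_inner_smul_left, mul_smul]

/-- A configuration is perfect if the maps `P_x`, `x ∈ S`, span the symmetric maps. -/
def IsPerfectCfg {F : Type*} [NormedAddCommGroup F] [InnerProductSpace ℝ F]
    (S : Set F) : Prop :=
  ∀ T : F →ₗ[ℝ] F, T.IsSymmetric → T ∈ Submodule.span ℝ (projMap '' S)

/-- A configuration is eutactic if `Id = Σ_{x∈S} υ_x P_x` with `υ_x > 0`, `υ_x = υ_{-x}`. -/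
def IsEutacticCfg {F : Type*} [NormedAddCommGroup F] [InnerProductSpace ℝ F]
    (S : Set F) : Prop :=
  ∃ υ : F → ℝ, (∀ x ∈ S, 0 < υ x) ∧ (∀ x ∉ S, υ x = 0) ∧
    (Function.support υ).Finite ∧ (∀ x, υ x = υ (-x)) ∧
    ∑ᶠ x, υ x • projMap x = (LinearMap.id : F →ₗ[ℝ] F)

/-- A configuration is semi-eutactic if `Id = Σ_{x∈S} υ_x P_x` with `υ_x ≥ 0`, `υ_x = υ_{-x}`. -/
def IsSemiEutacticCfg {F : Type*} [NormedAddCommGroup F] [InnerProductSpace ℝ F]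
    (S : Set F) : Prop :=
  ∃ υ : F → ℝ, (∀ x ∈ S, 0 ≤ υ x) ∧ (∀ x ∉ S, υ x = 0) ∧
    (Function.support υ).Finite ∧ (∀ x, υ x = υ (-x)) ∧
    ∑ᶠ x, υ x • projMap x = (LinearMap.id : F →ₗ[ℝ] F)

/-- A configuration is extreme if it is perfect and eutactic. -/
def IsExtremeCfg {F : Type*} [NormedAddCommGroup F] [InnerProductSpace ℝ F]
    (S : Set F) : Prop :=
  IsPerfectCfg S ∧ IsEutacticCfg S

/-- Hilbert–Schmidt (Frobenius) norm of a linear map on `ℝ^n`. -/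
def frobNorm {n : ℕ} (T : Euc n →ₗ[ℝ] Euc n) : ℝ :=
  Real.sqrt (∑ j, ∑ i, (T (EuclideanSpace.single j 1) i) ^ 2)

/-- The lattice `T ℤ^n` as a set of points. -/
def latticeSet {n : ℕ} (T : Euc n →ₗ[ℝ] Euc n) : Set (Euc n) :=
  {v | ∃ z : Fin n → ℤ, v = T (∑ i, (z i : ℝ) • EuclideanSpace.single i 1)}

/-- A set is an (n-dimensional) lattice if it is `T ℤ^n` for an invertible `T`. -/
def IsLattice {n : ℕ} (Λ : Set (Euc n)) : Prop :=
  ∃ T : Euc n →ₗ[ℝ] Euc n, LinearMap.det T ≠ 0 ∧ Λ = latticeSet T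

/-- The determinant `d(Λ) = |det T|` of a lattice. -/
def latDet {n : ℕ} (Λ : Set (Euc n)) : ℝ :=
  sInf {d | ∃ T : Euc n →ₗ[ℝ] Euc n, Λ = latticeSet T ∧ d = |LinearMap.det T|}

/-- The metric `δ(Λ, Λ') = inf ‖T - T'‖` on the space of lattices. -/
def latDist {n : ℕ} (Λ Λ' : Set (Euc n)) : ℝ :=
  sInf {d | ∃ T T' : Euc n →ₗ[ℝ] Euc n,
    Λ = latticeSet T ∧ Λ' = latticeSet T' ∧ d = frobNorm (T - T')}

/-- The minimal norm `m(Λ)`. -/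
def minNorm {n : ℕ} (Λ : Set (Euc n)) : ℝ :=
  sInf {r | ∃ x ∈ Λ, x ≠ 0 ∧ r = ‖x‖ ^ 2}

/-- The set `S(Λ)` of minimal vectors of a lattice. -/
def minVecs {n : ℕ} (Λ : Set (Euc n)) : Set (Euc n) :=
  {x | x ∈ Λ ∧ x ≠ 0 ∧ ‖x‖ ^ 2 = minNorm Λ}

/-- An origin-symmetric convex body. -/
structure IsSymCB {n : ℕ} (K : Set (Euc n)) : Prop where
  convex : Convex ℝ K
  compact : IsCompact K
  nonempty_interior : (interior K).Nonempty
  symm : -K = K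

/-- A lattice is admissible for a body if it meets the interior only at the origin. -/
def IsAdmissible {n : ℕ} (Λ K : Set (Euc n)) : Prop :=
  Λ ∩ interior K ⊆ {0}

/-- The critical determinant `d_K`. -/
def critDet {n : ℕ} (K : Set (Euc n)) : ℝ :=
  sInf {d | ∃ Λ : Set (Euc n), IsLattice Λ ∧ IsAdmissible Λ K ∧ d = latDet Λ}

/-- A critical lattice of `K`: an admissible lattice attaining the critical determinant. -/
def IsCriticalLattice {n : ℕ} (Λ K : Set (Euc n)) : Prop :=
  IsLattice Λ ∧ IsAdmissible Λ K ∧ latDet Λ = critDet K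

/-- The optimal lattice packing fraction `φ(K) = 2⁻ⁿ vol(K) / d_K`. -/
def packFrac {n : ℕ} (K : Set (Euc n)) : ℝ :=
  (volume K).toReal / (2 ^ n * critDet K)

/-- The closed unit ball `Bⁿ`. -/
def unitBall (n : ℕ) : Set (Euc n) := Metric.closedBall 0 1

/-- The support function of a body. -/
def suppFn {n : ℕ} (K : Set (Euc n)) (x : Euc n) : ℝ :=
  sSup ((fun y => ⟪x, y⟫) '' K)

/-- The radial function of a body. -/
def radFn {n : ℕ} (K : Set (Euc n)) (x : Euc n) : ℝ :=
  sSup {t : ℝ | 0 ≤ t ∧ t • x ∈ K}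

/-!
By duality (Stiemke's lemma), a finite symmetric configuration `S` is extreme iff it is
descent-free: `A = 0` is the only symmetric map with `tr A ≤ 0` and `⟪y, A y⟫ ≥ 0` for all `y ∈ S`.

If a body `K` properly contained in the ball has the same critical determinant, it misses some unit
vector `z`. Rotate a critical lattice `Λ` so that a given `x ∈ S(Λ)` becomes `z`. A descent
direction `A ≠ 0` for `S(Λ) ∖ {x, -x}` would make `(1 + t A) Λ`, for small `t > 0`, a `K`-admissible
lattice of determinant less than the critical one.

Conversely, truncate the ball by two antipodal caps of height tending to zero. If this always
lowered the critical determinant, Mahler compactness would give a critical lattice `Λ` and maps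
`G → 1` with `|det G| < 1` such that `G Λ` is admissible for a truncated ball. By the parallelogram
law, vectors of `G Λ` inside the two caps form at most one pair `±G x`, so `G` shortens no vector of
`S(Λ) ∖ {x, -x}`; as that configuration is descent-free, `|det G| ≥ 1` for `G` near `1`.
-/

open scoped Topology

/-! ### Extremality by duality -/

section Configurations

variable {E : Type*} [NormedAddCommGroup E] [InnerProductSpace ℝ E]

theorem projMap_apply (x y : E) : projMap x y = ⟪y, x⟫ • x := rfl

theorem projMap_neg (x : E) : projMap (-x) = projMap x := by
  ext y
  simp only [projMap_apply, inner_neg_right, smul_neg, neg_smul, neg_neg]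

theorem isSymmetric_projMap (x : E) : (projMap x).IsSymmetric := fun y z => by
  rw [projMap_apply, projMap_apply, real_inner_smul_left, real_inner_smul_right,
    real_inner_comm z x, mul_comm]

/-- `S` is *descent-free* if there is no symmetric `A ≠ 0` such that, to first order in `t`, the
deformation `id + t A` shortens no vector of `S` and does not increase the volume. For finite
symmetric configurations this is the linear-programming dual of extremality. -/
def IsDescentFree (S : Set E) : Prop :=
  ∀ A : E →ₗ[ℝ] E, A.IsSymmetric → LinearMap.trace ℝ E A ≤ 0 → (∀ y ∈ S, 0 ≤ ⟪y, A y⟫) → A = 0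

theorem IsDescentFree.mono {S S' : Set E} (h : IsDescentFree S) (hSS' : S ⊆ S') :
    IsDescentFree S' :=
  fun A hA htr hS' => h A hA htr fun y hy => hS' y (hSS' hy)

theorem IsDescentFree.image {S : Set E} (hS : IsDescentFree S) (U : E ≃ₗᵢ[ℝ] E) :
    IsDescentFree (U '' S) := by
  intro A hA htr hnonneg
  have hconj : U.symm.toLinearEquiv.conj A = 0 := by
    refine hS _ ((LinearMap.isSymmetric_linearIsometryEquiv_conj_iff A U.symm).2 hA)
      (by rwa [LinearMap.trace_conj']) fun y hy => ?_
    have : ⟪y, U.symm.toLinearEquiv.conj A y⟫ = ⟪U y, A (U y)⟫ := by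
      rw [← U.symm.inner_map_map (U y), U.symm_apply_apply]
      rfl
    exact this ▸ hnonneg _ (Set.mem_image_of_mem U hy)
  simpa using hconj

variable [FiniteDimensional ℝ E]

theorem trace_comp_projMap (A : E →ₗ[ℝ] E) (x : E) :
    LinearMap.trace ℝ E (A ∘ₗ projMap x) = ⟪x, A x⟫ := by
  let b := stdOrthonormalBasis ℝ E
  rw [LinearMap.trace_eq_sum_inner _ b, ← b.sum_inner_mul_inner x (A x)]
  refine Finset.sum_congr rfl fun i _ => ?_
  rw [LinearMap.comp_apply, projMap_apply, map_smul, inner_smul_right, real_inner_comm x]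

theorem eq_zero_of_trace_comp_self {A : E →ₗ[ℝ] E} (hA : A.IsSymmetric)
    (h : LinearMap.trace ℝ E (A ∘ₗ A) = 0) : A = 0 := by
  let b := stdOrthonormalBasis ℝ E
  have hsq : ∑ i, ‖A (b i)‖ ^ 2 = 0 := by
    rw [← h, LinearMap.trace_eq_sum_inner _ b]
    refine Finset.sum_congr rfl fun i _ => ?_
    rw [LinearMap.comp_apply, ← hA, real_inner_self_eq_norm_sq]
  refine b.toBasis.ext fun i => ?_
  have hi := (Finset.sum_eq_zero_iff_of_nonneg fun _ _ => sq_nonneg _).1 hsq i (Finset.mem_univ i)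
  simpa using hi

theorem IsEutacticCfg.inner_eq_zero {S : Set E} (hS : IsEutacticCfg S) {A : E →ₗ[ℝ] E}
    (htr : LinearMap.trace ℝ E A ≤ 0) (hA : ∀ y ∈ S, 0 ≤ ⟪y, A y⟫) : ∀ y ∈ S, ⟪y, A y⟫ = 0 := by
  obtain ⟨υ, hpos, hzero, hfin, -, hid⟩ := hS
  rw [finsum_eq_sum_of_support_subset (s := hfin.toFinset) _ (by
    simpa using Function.support_smul_subset_left υ projMap)] at hid
  have hnonneg : ∀ x ∈ hfin.toFinset, 0 ≤ υ x * ⟪x, A x⟫ := fun x hx => by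
    have hxS : x ∈ S := not_imp_comm.1 (hzero x) (by simpa using hx)
    exact mul_nonneg (hpos x hxS).le (hA x hxS)
  let τ : (E →ₗ[ℝ] E) →ₗ[ℝ] ℝ := LinearMap.trace ℝ E ∘ₗ LinearMap.llcomp ℝ E E E A
  have hτ : ∀ x, τ (projMap x) = ⟪x, A x⟫ := trace_comp_projMap A
  have hsum : ∑ x ∈ hfin.toFinset, υ x * ⟪x, A x⟫ = LinearMap.trace ℝ E A := by
    change _ = τ LinearMap.id
    rw [← hid, map_sum]
    simp only [map_smul, hτ, smul_eq_mul]
  have hterm := (Finset.sum_eq_zero_iff_of_nonneg hnonneg).1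
    (le_antisymm (hsum.trans_le htr) (Finset.sum_nonneg hnonneg))
  intro y hy
  exact (mul_eq_zero.1 (hterm y (by simpa using (hpos y hy).ne'))).resolve_left (hpos y hy).ne'

theorem IsExtremeCfg.isDescentFree {S : Set E} (hS : IsExtremeCfg S) : IsDescentFree S := by
  intro A hA htr hnonneg
  have hzero := hS.2.inner_eq_zero htr hnonneg
  have hspan : Submodule.span ℝ (projMap '' S) ≤
      LinearMap.ker (LinearMap.trace ℝ E ∘ₗ LinearMap.llcomp ℝ E E E A) := by
    rw [Submodule.span_le]
    rintro _ ⟨y, hy, rfl⟩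
    exact (trace_comp_projMap A y).trans (hzero y hy)
  exact eq_zero_of_trace_comp_self hA (hspan (hS.1 A hA))

theorem exists_isSymmetric_trace_comp_eq (f : (E →ₗ[ℝ] E) →ₗ[ℝ] ℝ) :
    ∃ A : E →ₗ[ℝ] E, A.IsSymmetric ∧
      ∀ B : E →ₗ[ℝ] E, B.IsSymmetric → f B = LinearMap.trace ℝ E (A ∘ₗ B) := by
  let V : Submodule ℝ (E →ₗ[ℝ] E) :=
    { carrier := {A | A.IsSymmetric}
      add_mem' := LinearMap.IsSymmetric.add
      zero_mem' := LinearMap.IsSymmetric.zero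
      smul_mem' := fun c _ hA => hA.smul (by simp) }
  let Φ : V →ₗ[ℝ] Module.Dual ℝ V :=
    ((LinearMap.llcomp ℝ E E E).compr₂ (LinearMap.trace ℝ E)).domRestrict₁₂ V V
  have hinj : Function.Injective Φ := by
    refine (injective_iff_map_eq_zero Φ).2 fun A hA => Subtype.ext ?_
    exact eq_zero_of_trace_comp_self A.2 (LinearMap.congr_fun hA A)
  obtain ⟨A, hA⟩ := (LinearMap.injective_iff_surjective_of_finrank_eq_finrank
    Subspace.dual_finrank_eq.symm).1 hinj (f ∘ₗ V.subtype)
  exact ⟨A, A.2, fun B hB => (LinearMap.congr_fun hA ⟨B, hB⟩).symm⟩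

theorem IsDescentFree.isPerfectCfg {S : Set E} (hS : IsDescentFree S) : IsPerfectCfg S := by
  intro T hT
  by_contra hmem
  obtain ⟨f, hfT, hker⟩ := Submodule.exists_le_ker_of_notMem hmem
  obtain ⟨A, hA, hf⟩ := exists_isSymmetric_trace_comp_eq f
  have hzero : ∀ y ∈ S, ⟪y, A y⟫ = 0 := fun y hy => by
    rw [← trace_comp_projMap, ← hf _ (isSymmetric_projMap y)]
    exact hker (Submodule.subset_span ⟨y, hy, rfl⟩)
  have hA0 : A = 0 := by
    rcases le_total (LinearMap.trace ℝ E A) 0 with htr | htr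
    · exact hS A hA htr fun y hy => (hzero y hy).ge
    · have hneg : (-A).IsSymmetric := by simpa using hA.smul (c := -1) (by simp)
      refine neg_eq_zero.1 (hS (-A) hneg (by simpa using htr) fun y hy => ?_)
      rw [LinearMap.neg_apply, inner_neg_right, hzero y hy, neg_zero]
  exact hfT (by rw [hf T hT, hA0, LinearMap.zero_comp, map_zero])

end Configurations

theorem nonpos_of_forall_add_mul_le {a b c : ℝ} (h : ∀ t : ℝ, 0 < t → a + t * b ≤ c) : b ≤ 0 := by
  by_contra! hb
  have := h ((|c - a| + 1) / b) (by positivity)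
  rw [div_mul_cancel₀ _ hb.ne'] at this
  linarith [le_abs_self (c - a)]

open Pointwise in
theorem exists_nonneg_separating {ι : Type*} [Finite ι] [DecidableEq ι] (W : Submodule ℝ (ι → ℝ))
    {c₀ : ι → ℝ} (h : ∀ c, c - c₀ ∈ W → ¬ ∀ i, 0 < c i) :
    ∃ g : (ι → ℝ) →ₗ[ℝ] ℝ, g ≠ 0 ∧ (∀ w ∈ W, g w = 0) ∧ (∀ i, 0 ≤ g (Pi.single i 1)) ∧
      g c₀ ≤ 0 := by
  let P : Set (ι → ℝ) := Set.univ.pi fun _ => Set.Ioi 0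
  have hPo : IsOpen P := isOpen_set_pi Set.finite_univ fun _ _ => isOpen_Ioi
  have hPc : Convex ℝ P := convex_pi fun _ _ => convex_Ioi 0
  have hP : ∀ c ∈ P, ∀ t : ℝ, 0 < t → t • c ∈ P := fun c hc t ht i hi => mul_pos ht (hc i hi)
  have hone : (1 : ι → ℝ) ∈ P := fun _ _ => one_pos (α := ℝ)
  have hc₀ : c₀ ∉ P + (W : Set (ι → ℝ)) := by
    rintro ⟨c, hc, w, hw, rfl⟩
    exact h c (by simpa using W.neg_mem hw) fun i => hc i trivial
  obtain ⟨f, hf⟩ := geometric_hahn_banach_open_point (hPc.add W.convex) hPo.add_right hc₀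
  have hfP : ∀ c ∈ P, f c < f c₀ := fun c hc => by
    simpa using hf _ (Set.add_mem_add hc W.zero_mem)
  have hcone : ∀ c ∈ P, f c ≤ 0 := fun c hc =>
    nonpos_of_forall_add_mul_le (a := 0) fun t ht => by
      simpa using (hfP _ (hP c hc t ht)).le
  have hW : ∀ w ∈ W, f w ≤ 0 := fun w hw =>
    nonpos_of_forall_add_mul_le fun t _ => by
      simpa using (hf _ (Set.add_mem_add hone (W.smul_mem t hw))).le
  refine ⟨-(f : (ι → ℝ) →ₗ[ℝ] ℝ), fun hzero => ?_, fun w hw => ?_, fun i => ?_, ?_⟩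
  · have hf0 : ∀ c, f c = 0 := fun c => by simpa using LinearMap.congr_fun hzero c
    simpa [hf0] using hfP 1 hone
  · have hneg := hW (-w) (W.neg_mem hw)
    rw [map_neg] at hneg
    simpa using le_antisymm (hW w hw) (by linarith)
  · suffices f (Pi.single i 1) ≤ 0 by simpa using this
    refine nonpos_of_forall_add_mul_le (a := f 1) (c := 0) fun t ht => ?_
    rw [← smul_eq_mul, ← map_smul, ← map_add]
    refine hcone _ fun j _ => ?_
    rcases eq_or_ne j i with rfl | hji
    · simpa using by positivity
    · simp [hji]
  · refine nonpos_of_forall_add_mul_le (a := f 1) (c := 0) fun t ht => ?_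
    have hscaled := hfP _ (hP 1 hone t⁻¹ (inv_pos.2 ht))
    rw [map_smul, smul_eq_mul, inv_mul_lt_iff₀ ht] at hscaled
    simpa using hscaled.le

-- Stiemke's lemma, over the reals.
theorem exists_pos_sum_smul_eq {ι V : Type*} [Fintype ι] [AddCommGroup V] [Module ℝ V] {p : ι → V}
    {v : V} (hv : v ∈ Submodule.span ℝ (Set.range p))
    (h : ∀ f : V →ₗ[ℝ] ℝ, (∀ i, 0 ≤ f (p i)) → f v ≤ 0 → ∀ i, f (p i) = 0) :
    ∃ c : ι → ℝ, (∀ i, 0 < c i) ∧ ∑ i, c i • p i = v := by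
  classical
  let L : (ι → ℝ) →ₗ[ℝ] V := Fintype.linearCombination ℝ p
  have hLsingle : ∀ i, L (Pi.single i 1) = p i := fun i => by
    simp [L, Fintype.linearCombination_apply_single]
  rw [← Fintype.range_linearCombination] at hv
  obtain ⟨c₀, hc₀⟩ := hv
  by_contra! hnone
  obtain ⟨g, hg0, hgker, hgsingle, hgc₀⟩ :=
    exists_nonneg_separating (LinearMap.ker L) (c₀ := c₀) fun c hc hpos => hnone c hpos <| by
      rw [← hc₀, ← sub_eq_zero]
      exact (map_sub L c c₀).symm.trans hc
  obtain ⟨f, rfl⟩ : g ∈ LinearMap.range L.dualMap := by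
    rw [LinearMap.range_dualMap_eq_dualAnnihilator_ker, Submodule.mem_dualAnnihilator]
    exact hgker
  have hfp := h f (fun i => by simpa [hLsingle] using hgsingle i) (by simpa [L, hc₀] using hgc₀)
  refine hg0 (LinearMap.pi_ext' fun i => LinearMap.ext_ring ?_)
  simp [hLsingle, hfp]

section Extremality

variable {E : Type*} [NormedAddCommGroup E] [InnerProductSpace ℝ E] [FiniteDimensional ℝ E]

theorem IsDescentFree.exists_weight {S : Set E} (hfin : S.Finite) (hS : IsDescentFree S) :
    ∃ c : E → ℝ, (∀ x ∈ S, 0 < c x) ∧ (∀ x ∉ S, c x = 0) ∧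
      ∑ᶠ x, c x • projMap x = (LinearMap.id : E →ₗ[ℝ] E) := by
  have : Fintype S := hfin.fintype
  obtain ⟨c, hpos, hc⟩ :
      ∃ c : S → ℝ, (∀ x, 0 < c x) ∧ ∑ x, c x • projMap (x : E) = LinearMap.id := by
    refine exists_pos_sum_smul_eq ?_ fun f hf hfid x => ?_
    · rw [← Set.image_eq_range]
      exact hS.isPerfectCfg _ LinearMap.IsSymmetric.id
    · obtain ⟨A, hA, hfA⟩ := exists_isSymmetric_trace_comp_eq f
      have hfproj : ∀ y, f (projMap y) = ⟪y, A y⟫ := fun y => by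
        rw [hfA _ (isSymmetric_projMap y), trace_comp_projMap]
      have hA0 : A = 0 := by
        refine hS A hA ?_ fun y hy => (hfproj y).subst (hf ⟨y, hy⟩)
        simpa [hfA _ LinearMap.IsSymmetric.id] using hfid
      rw [hfproj, hA0, LinearMap.zero_apply, inner_zero_right]
  have hext : ∀ x : S, Function.extend Subtype.val c 0 (x : E) = c x :=
    Subtype.val_injective.extend_apply c 0
  have hext' : ∀ x ∉ S, Function.extend Subtype.val c 0 x = 0 := fun x hx =>
    Function.extend_apply' _ _ _ fun ⟨y, hy⟩ => hx (hy ▸ y.2)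
  refine ⟨Function.extend Subtype.val c 0, fun x hx => hext ⟨x, hx⟩ ▸ hpos _, hext', ?_⟩
  rw [← hc, ← finsum_eq_sum_of_fintype]
  simp only [← hext]
  rw [finsum_set_coe_eq_finsum_mem S (f := fun x => Function.extend Subtype.val c 0 x • projMap x)]
  refine finsum_congr fun x => ?_
  by_cases hx : x ∈ S
  · simp only [hx, finsum_true]
  · simp only [hx, finsum_false, hext' x hx, zero_smul]

theorem IsDescentFree.isEutacticCfg {S : Set E} (hfin : S.Finite) (hsym : ∀ x ∈ S, -x ∈ S)
    (hS : IsDescentFree S) : IsEutacticCfg S := by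
  obtain ⟨c, hpos, hzero, hc⟩ := hS.exists_weight hfin
  have hzero' : ∀ x ∉ S, c (-x) = 0 := fun x hx => hzero _ fun h => hx (neg_neg x ▸ hsym _ h)
  have hc' : ∑ᶠ x, c (-x) • projMap x = (LinearMap.id : E →ₗ[ℝ] E) := by
    rw [← hc, ← finsum_comp_equiv (Equiv.neg E)]
    simp only [Equiv.neg_apply, projMap_neg, neg_neg]
  have hsupp : ∀ d : E → ℝ, (∀ x ∉ S, d x = 0) → (Function.support d).Finite := fun d hd =>
    hfin.subset fun x hx => not_imp_comm.1 (hd x) hx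
  have hmean : ∀ x ∉ S, 2⁻¹ * (c x + c (-x)) = 0 := fun x hx => by
    rw [hzero x hx, hzero' x hx, add_zero, mul_zero]
  refine ⟨fun x => 2⁻¹ * (c x + c (-x)), fun x hx => ?_, hmean, hsupp _ hmean, fun x => ?_, ?_⟩
  · have := hpos x hx
    have := hpos _ (hsym x hx)
    positivity
  · simp only [neg_neg, add_comm]
  · simp only [mul_smul, add_smul]
    rw [← smul_finsum, finsum_add_distrib, hc, hc', ← two_smul ℝ, smul_smul]
    · norm_num
    · exact (hsupp c hzero).subset (Function.support_smul_subset_left c projMap)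
    · exact (hsupp _ hzero').subset (Function.support_smul_subset_left (fun x => c (-x)) projMap)

theorem isExtremeCfg_iff_isDescentFree {S : Set E} (hfin : S.Finite) (hsym : ∀ x ∈ S, -x ∈ S) :
    IsExtremeCfg S ↔ IsDescentFree S :=
  ⟨IsExtremeCfg.isDescentFree, fun h => ⟨h.isPerfectCfg, h.isEutacticCfg hfin hsym⟩⟩

/-- A configuration `S` is redundantly extreme if it is extreme and stays so after the removal of
any antipodal pair. -/
def IsRedundantlyExtremeCfg (S : Set E) : Prop :=
  IsExtremeCfg S ∧ ∀ x ∈ S, IsExtremeCfg (S \ {x, -x})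

theorem isRedundantlyExtremeCfg_iff {S : Set E} (hfin : S.Finite) (hsym : ∀ x ∈ S, -x ∈ S) :
    IsRedundantlyExtremeCfg S ↔ IsDescentFree S ∧ ∀ x ∈ S, IsDescentFree (S \ {x, -x}) := by
  refine and_congr (isExtremeCfg_iff_isDescentFree hfin hsym) (forall₂_congr fun x _ => ?_)
  refine isExtremeCfg_iff_isDescentFree hfin.sdiff fun y ⟨hyS, hy⟩ => ⟨hsym y hyS, ?_⟩
  simpa [neg_eq_iff_eq_neg, or_comm] using hy

theorem IsRedundantlyExtremeCfg.image {S : Set E} (hfin : S.Finite) (hsym : ∀ x ∈ S, -x ∈ S)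
    (hS : IsRedundantlyExtremeCfg S) (U : E ≃ₗᵢ[ℝ] E) : IsRedundantlyExtremeCfg (U '' S) := by
  rw [isRedundantlyExtremeCfg_iff hfin hsym] at hS
  have hsymU : ∀ y ∈ U '' S, -y ∈ U '' S := Set.forall_mem_image.2 fun x hx =>
    map_neg U x ▸ Set.mem_image_of_mem U (hsym x hx)
  rw [isRedundantlyExtremeCfg_iff (hfin.image U) hsymU]
  refine ⟨hS.1.image U, Set.forall_mem_image.2 fun x hx => ?_⟩
  rw [← map_neg, ← Set.image_pair, ← Set.image_sdiff U.injective]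
  exact (hS.2 x hx).image U

end Extremality

/-! ### The determinant near the identity -/

theorem exists_pos_forall_mul_norm_le {V : Type*} [NormedAddCommGroup V] [NormedSpace ℝ V]
    [FiniteDimensional ℝ V] {C : Set V} (hC : IsClosed C)
    (hcone : ∀ x ∈ C, ∀ t : ℝ, 0 < t → t • x ∈ C) (f : V →ₗ[ℝ] ℝ)
    (hf : ∀ x ∈ C, x ≠ 0 → 0 < f x) : ∃ c : ℝ, 0 < c ∧ ∀ x ∈ C, c * ‖x‖ ≤ f x := by
  obtain ⟨c, hc, hcf⟩ : ∃ c : ℝ, 0 < c ∧ ∀ x ∈ C ∩ sphere 0 1, c ≤ f x := by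
    have hcompact : IsCompact (C ∩ sphere 0 1) := (isCompact_sphere _ _).inter_left hC
    rcases (C ∩ sphere 0 1).eq_empty_or_nonempty with hempty | hne
    · exact ⟨1, one_pos, by simp [hempty]⟩
    · obtain ⟨x, hx, hmin⟩ :=
        hcompact.exists_isMinOn hne f.continuous_of_finiteDimensional.continuousOn
      exact ⟨f x, hf x hx.1 (ne_zero_of_mem_unit_sphere ⟨x, hx.2⟩), fun y hy => hmin hy⟩
  refine ⟨c, hc, fun x hx => ?_⟩
  rcases eq_or_ne x 0 with rfl | hx0
  · simp
  have hnorm : 0 < ‖x‖ := norm_pos_iff.2 hx0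
  have := hcf (‖x‖⁻¹ • x) ⟨hcone x hx _ (inv_pos.2 hnorm), by simp [norm_smul, hnorm.ne']⟩
  rwa [map_smul, smul_eq_mul, ← div_eq_inv_mul, le_div_iff₀ hnorm] at this

theorem exp_sub_two_mul_sq_le_one_add {x : ℝ} (hx : |x| ≤ 1 / 2) :
    Real.exp (x - 2 * x ^ 2) ≤ 1 + x := by
  have hx₁ := neg_le_of_abs_le hx
  have hpos : 0 < 1 + x := by linarith
  have hinv : (1 + x)⁻¹ ≤ 1 - x + 2 * x ^ 2 := by
    rw [inv_le_iff_one_le_mul₀ hpos]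
    nlinarith [mul_nonneg (sq_nonneg x) (show 0 ≤ 1 + 2 * x by linarith)]
  rw [← Real.le_log_iff_exp_le hpos]
  have hlog := Real.log_le_sub_one_of_pos (inv_pos.2 hpos)
  rw [Real.log_inv] at hlog
  linarith

section DeterminantNearOne

variable {E : Type*} [NormedAddCommGroup E] [InnerProductSpace ℝ E] [FiniteDimensional ℝ E]
  {A : E →L[ℝ] E}

theorem det_one_add_eq_prod_eigenvalues (hA : (A : E →ₗ[ℝ] E).IsSymmetric) :
    (1 + A).det = ∏ i, (1 + hA.eigenvalues rfl i) := by
  let b := hA.eigenvectorBasis rfl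
  have hb : ∀ i, (1 + A) (b i) = (1 + hA.eigenvalues rfl i) • b i := fun i => by
    rw [add_smul, one_smul]
    exact congrArg (b i + ·) (hA.apply_eigenvectorBasis rfl i)
  have hdiag : LinearMap.toMatrix b.toBasis b.toBasis ((1 + A : E →L[ℝ] E) : E →ₗ[ℝ] E) =
      Matrix.diagonal fun i => 1 + hA.eigenvalues rfl i := by
    ext i j
    rw [LinearMap.toMatrix_apply, OrthonormalBasis.coe_toBasis, ContinuousLinearMap.coe_coe, hb,
      OrthonormalBasis.coe_toBasis_repr_apply, map_smul, b.repr_self]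
    rcases eq_or_ne i j with rfl | hij
    · simp
    · simp [hij]
  rw [ContinuousLinearMap.det, ← LinearMap.det_toMatrix b.toBasis, hdiag, Matrix.det_diagonal]

theorem abs_eigenvalues_le_norm (hA : (A : E →ₗ[ℝ] E).IsSymmetric)
    (i : Fin (Module.finrank ℝ E)) : |hA.eigenvalues rfl i| ≤ ‖A‖ := by
  have hle := A.le_opNorm (hA.eigenvectorBasis rfl i)
  rw [← ContinuousLinearMap.coe_coe, hA.apply_eigenvectorBasis] at hle
  simpa [norm_smul] using hle

theorem one_add_eigenvalues_pos (hA : (A : E →ₗ[ℝ] E).IsSymmetric) (hnorm : ‖A‖ < 1)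
    (i : Fin (Module.finrank ℝ E)) : 0 < 1 + hA.eigenvalues rfl i := by
  linarith [neg_le_of_abs_le (abs_eigenvalues_le_norm hA i)]

theorem det_one_add_pos (hA : (A : E →ₗ[ℝ] E).IsSymmetric) (hnorm : ‖A‖ < 1) : 0 < (1 + A).det := by
  rw [det_one_add_eq_prod_eigenvalues hA]
  exact Finset.prod_pos fun i _ => one_add_eigenvalues_pos hA hnorm i

theorem det_one_add_lt_one (hA : (A : E →ₗ[ℝ] E).IsSymmetric) (hA0 : A ≠ 0)
    (htr : LinearMap.trace ℝ E (A : E →ₗ[ℝ] E) ≤ 0) (hnorm : ‖A‖ < 1) : (1 + A).det < 1 := by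
  obtain ⟨i, hi⟩ : ∃ i, hA.eigenvalues rfl i ≠ 0 := by
    by_contra! hzero
    refine hA0 (ContinuousLinearMap.coe_injective ?_)
    refine (hA.eigenvectorBasis rfl).toBasis.ext fun i => ?_
    simp [hA.apply_eigenvectorBasis, hzero i]
  rw [hA.trace_eq_sum_eigenvalues rfl] at htr
  calc (1 + A).det = ∏ i, (1 + hA.eigenvalues rfl i) := det_one_add_eq_prod_eigenvalues hA
    _ < ∏ i, Real.exp (hA.eigenvalues rfl i) :=
      Finset.prod_lt_prod (fun i _ => one_add_eigenvalues_pos hA hnorm i)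
        (fun i _ => by simpa [add_comm] using Real.add_one_le_exp (hA.eigenvalues rfl i))
        ⟨i, Finset.mem_univ i, by simpa [add_comm] using Real.add_one_lt_exp hi⟩
    _ = Real.exp (∑ i, hA.eigenvalues rfl i) := (Real.exp_sum _ _).symm
    _ ≤ 1 := Real.exp_le_one_iff.2 (by exact_mod_cast htr)

theorem one_le_det_one_add (hA : (A : E →ₗ[ℝ] E).IsSymmetric) (hnorm : ‖A‖ ≤ 1 / 2)
    (htr : 2 * Module.finrank ℝ E * ‖A‖ ^ 2 ≤ LinearMap.trace ℝ E (A : E →ₗ[ℝ] E)) :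
    1 ≤ (1 + A).det := by
  have hsq : ∀ i, (hA.eigenvalues rfl i) ^ 2 ≤ ‖A‖ ^ 2 := fun i => by
    simpa using sq_le_sq' (neg_le_of_abs_le (abs_eigenvalues_le_norm hA i))
      (le_of_abs_le (abs_eigenvalues_le_norm hA i))
  have hsum : 0 ≤ ∑ i, (hA.eigenvalues rfl i - 2 * (hA.eigenvalues rfl i) ^ 2) := by
    have hle := Finset.sum_le_sum fun i (_ : i ∈ Finset.univ) => hsq i
    rw [hA.trace_eq_sum_eigenvalues rfl] at htr
    simp only [Finset.sum_const, Finset.card_univ, Fintype.card_fin, nsmul_eq_mul] at hle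
    simp only [Finset.sum_sub_distrib, ← Finset.mul_sum]
    simp only [RCLike.ofReal_real_eq_id, id_eq] at htr
    linarith
  calc 1 ≤ Real.exp (∑ i, (hA.eigenvalues rfl i - 2 * (hA.eigenvalues rfl i) ^ 2)) :=
      Real.one_le_exp_iff.2 hsum
    _ = ∏ i, Real.exp (hA.eigenvalues rfl i - 2 * (hA.eigenvalues rfl i) ^ 2) := Real.exp_sum _ _
    _ ≤ ∏ i, (1 + hA.eigenvalues rfl i) :=
      Finset.prod_le_prod (fun _ _ => (Real.exp_pos _).le) fun i _ =>
        exp_sub_two_mul_sq_le_one_add ((abs_eigenvalues_le_norm hA i).trans hnorm)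
    _ = (1 + A).det := (det_one_add_eq_prod_eigenvalues hA).symm

theorem IsDescentFree.exists_pos_forall_mul_norm_le_trace {S : Set E} (hS : IsDescentFree S) :
    ∃ c : ℝ, 0 < c ∧ ∀ A : E →L[ℝ] E, (A : E →ₗ[ℝ] E).IsSymmetric → (∀ y ∈ S, 0 ≤ ⟪y, A y⟫) →
      c * ‖A‖ ≤ LinearMap.trace ℝ E (A : E →ₗ[ℝ] E) := by
  let C : Set (E →L[ℝ] E) := {A | (A : E →ₗ[ℝ] E).IsSymmetric ∧ ∀ y ∈ S, 0 ≤ ⟪y, A y⟫}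
  have hC : IsClosed C := by
    simp only [C, LinearMap.IsSymmetric, Set.ofPred_and, Set.ofPred_forall,
      ContinuousLinearMap.coe_coe]
    refine .inter (isClosed_iInter fun x => isClosed_iInter fun y => isClosed_eq ?_ ?_)
      (isClosed_biInter fun y _ => isClosed_le ?_ ?_) <;> fun_prop
  have hcone : ∀ A ∈ C, ∀ t : ℝ, 0 < t → t • A ∈ C := fun A hA t ht =>
    ⟨hA.1.smul (by simp), fun y hy => by
      rw [smul_apply, inner_smul_right]
      exact mul_nonneg ht.le (hA.2 y hy)⟩
  obtain ⟨c, hc, hle⟩ := exists_pos_forall_mul_norm_le hC hcone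
    (LinearMap.trace ℝ E ∘ₗ ContinuousLinearMap.coeLM ℝ) fun A hA hA0 => by
      by_contra! htr
      exact hA0 (ContinuousLinearMap.coe_injective (hS A hA.1 htr hA.2))
  exact ⟨c, hc, fun A hA hnonneg => hle A ⟨hA, hnonneg⟩⟩

theorem inner_star_mul_self_sub_one (G : E →L[ℝ] E) (y : E) :
    ⟪y, (star G * G - 1) y⟫ = ‖G y‖ ^ 2 - ‖y‖ ^ 2 := by
  simp [inner_sub_right, ContinuousLinearMap.star_eq_adjoint,
    ContinuousLinearMap.adjoint_inner_right]

theorem det_star_mul_self (G : E →L[ℝ] E) : (star G * G).det = G.det ^ 2 := by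
  have h := G.normDet_sq
  rw [LinearMap.normDet_eq_abs_det, sq_abs] at h
  exact h.symm

theorem IsDescentFree.eventually_one_le_abs_det {S : Set E} (hS : IsDescentFree S)
    (hunit : ∀ y ∈ S, ‖y‖ = 1) :
    ∀ᶠ G : E →L[ℝ] E in 𝓝 1, (∀ y ∈ S, 1 ≤ ‖G y‖) → 1 ≤ |G.det| := by
  obtain ⟨c, hc, htr⟩ := hS.exists_pos_forall_mul_norm_le_trace
  let F : (E →L[ℝ] E) → (E →L[ℝ] E) := fun G => star G * G - 1
  have hF : Filter.Tendsto (fun G => ‖F G‖) (𝓝 1) (𝓝 0) := by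
    have : Continuous fun G => ‖F G‖ := by fun_prop
    simpa [F] using this.tendsto 1
  have hsmall : (0 : ℝ) < min (1 / 2) (c / (2 * (Module.finrank ℝ E + 1))) := by positivity
  filter_upwards [hF.eventually_lt_const hsmall] with G hG hlong
  obtain ⟨hhalf, hcG⟩ := lt_min_iff.1 hG
  have hsymm : (F G : E →ₗ[ℝ] E).IsSymmetric :=
    ContinuousLinearMap.isSelfAdjoint_iff_isSymmetric.1
      ((IsSelfAdjoint.star_mul_self G).sub (.one _))
  have htrace := htr (F G) hsymm fun y hy => by
    rw [inner_star_mul_self_sub_one, hunit y hy]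
    nlinarith [hlong y hy]
  have hdet : 1 ≤ (1 + F G).det := by
    refine one_le_det_one_add hsymm hhalf.le (le_trans ?_ htrace)
    rw [lt_div_iff₀ (by positivity)] at hcG
    nlinarith [norm_nonneg (F G)]
  rw [add_sub_cancel, det_star_mul_self] at hdet
  rwa [← one_le_sq_iff_one_le_abs]

end DeterminantNearOne

/-! ### Lattices and critical determinants -/

section Lattice

variable {n : ℕ} {Λ K K' : Set (Euc n)} {T T' : Euc n →ₗ[ℝ] Euc n}

theorem latticeSet_eq_span (T : Euc n →ₗ[ℝ] Euc n) :
    latticeSet T =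
      (Submodule.span ℤ (Set.range fun i => T (EuclideanSpace.single i 1)) : Set (Euc n)) := by
  ext v
  rw [SetLike.mem_coe, Submodule.mem_span_range_iff_exists_fun]
  refine exists_congr fun z => ?_
  simp only [map_sum, Int.cast_smul_eq_zsmul, map_zsmul, eq_comm (a := v)]

theorem latticeSet_comp (G T : Euc n →ₗ[ℝ] Euc n) : latticeSet (G ∘ₗ T) = G '' latticeSet T := by
  ext v
  constructor
  · rintro ⟨z, rfl⟩
    exact ⟨_, ⟨z, rfl⟩, rfl⟩
  · rintro ⟨_, ⟨z, rfl⟩, rfl⟩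
    exact ⟨z, rfl⟩

theorem exists_det_eq_det_mul_intCast (h : latticeSet T' ⊆ latticeSet T) :
    ∃ m : ℤ, LinearMap.det T' = LinearMap.det T * m := by
  let b := (EuclideanSpace.basisFun (Fin n) ℝ).toBasis
  have hb (j : Fin n) : b j = EuclideanSpace.single j 1 := by simp [b]
  have hmem (j : Fin n) : T' (b j) ∈ latticeSet T := h <| by
    rw [latticeSet_eq_span, hb]
    exact Submodule.subset_span ⟨j, rfl⟩
  choose z hz using hmem
  let M : Matrix (Fin n) (Fin n) ℤ := Matrix.of fun i j => z j i
  have hfactor : T' = T ∘ₗ Matrix.toLin b b (M.map (Int.castRingHom ℝ)) := by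
    refine b.ext fun j => ?_
    rw [LinearMap.comp_apply, Matrix.toLin_self, hz]
    simp only [hb, M, Matrix.map_apply, Matrix.of_apply, eq_intCast]
  refine ⟨M.det, ?_⟩
  rw [hfactor, LinearMap.det_comp, LinearMap.det_toLin]
  exact congrArg _ (RingHom.map_det (Int.castRingHom ℝ) M).symm

theorem abs_det_le_of_latticeSet_subset (h : latticeSet T' ⊆ latticeSet T)
    (hT' : LinearMap.det T' ≠ 0) : |LinearMap.det T| ≤ |LinearMap.det T'| := by
  obtain ⟨m, hm⟩ := exists_det_eq_det_mul_intCast h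
  have hm0 : m ≠ 0 := by
    rintro rfl
    simp [hm] at hT'
  rw [hm, abs_mul]
  exact le_mul_of_one_le_right (abs_nonneg _) (mod_cast Int.one_le_abs hm0)

theorem latDet_latticeSet (hT : LinearMap.det T ≠ 0) :
    latDet (latticeSet T) = |LinearMap.det T| := by
  have hset : {d | ∃ T' : Euc n →ₗ[ℝ] Euc n, latticeSet T = latticeSet T' ∧
      d = |LinearMap.det T'|} = {|LinearMap.det T|} := by
    refine Set.eq_singleton_iff_unique_mem.2 ⟨⟨T, rfl, rfl⟩, ?_⟩
    rintro _ ⟨T', h, rfl⟩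
    have hT' : LinearMap.det T' ≠ 0 := by
      obtain ⟨m, hm⟩ := exists_det_eq_det_mul_intCast h.subset
      exact left_ne_zero_of_mul (hm ▸ hT)
    exact (abs_det_le_of_latticeSet_subset h.subset hT).antisymm
      (abs_det_le_of_latticeSet_subset h.symm.subset hT')
  rw [latDet, hset, csInf_singleton]

theorem latDet_nonneg (Λ : Set (Euc n)) : 0 ≤ latDet Λ :=
  Real.sInf_nonneg <| by
    rintro _ ⟨T, _, rfl⟩
    exact abs_nonneg _

theorem IsLattice.exists_eq_submodule (hΛ : IsLattice Λ) : ∃ L : Submodule ℤ (Euc n), Λ = L := by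
  obtain ⟨T, -, rfl⟩ := hΛ
  exact ⟨_, latticeSet_eq_span T⟩

theorem IsLattice.neg_mem (hΛ : IsLattice Λ) {v : Euc n} (hv : v ∈ Λ) : -v ∈ Λ := by
  obtain ⟨L, rfl⟩ := hΛ.exists_eq_submodule
  exact L.neg_mem hv

theorem IsLattice.sub_mem (hΛ : IsLattice Λ) {v w : Euc n} (hv : v ∈ Λ) (hw : w ∈ Λ) :
    v - w ∈ Λ := by
  obtain ⟨L, rfl⟩ := hΛ.exists_eq_submodule
  exact L.sub_mem hv hw

theorem IsLattice.finite_inter_of_isBounded (hΛ : IsLattice Λ) {s : Set (Euc n)}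
    (hs : Bornology.IsBounded s) : (Λ ∩ s).Finite := by
  obtain ⟨T, hT, rfl⟩ := hΛ
  rw [latticeSet_eq_span, Set.inter_comm]
  convert ZSpan.setFinite_inter ((EuclideanSpace.basisFun (Fin n) ℝ).toBasis.map
    (T.equivOfDetNeZero hT)) hs using 5
  ext1 i
  simp [LinearMap.equivOfDetNeZero]

theorem IsLattice.latDet_pos (hΛ : IsLattice Λ) : 0 < latDet Λ := by
  obtain ⟨T, hT, rfl⟩ := hΛ
  rw [latDet_latticeSet hT]
  exact abs_pos.2 hT

theorem IsLattice.image (hΛ : IsLattice Λ) {G : Euc n →L[ℝ] Euc n} (hG : G.det ≠ 0) :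
    IsLattice (G '' Λ) := by
  obtain ⟨T, hT, rfl⟩ := hΛ
  exact ⟨G ∘ₗ T, by simpa only [LinearMap.det_comp] using mul_ne_zero hG hT,
    (latticeSet_comp (G : Euc n →ₗ[ℝ] Euc n) T).symm⟩

theorem IsLattice.latDet_image (hΛ : IsLattice Λ) {G : Euc n →L[ℝ] Euc n} (hG : G.det ≠ 0) :
    latDet (G '' Λ) = |G.det| * latDet Λ := by
  obtain ⟨T, hT, rfl⟩ := hΛ
  have hGT : LinearMap.det ((G : Euc n →ₗ[ℝ] Euc n) ∘ₗ T) ≠ 0 := by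
    simpa only [LinearMap.det_comp] using mul_ne_zero hG hT
  change latDet ((G : Euc n →ₗ[ℝ] Euc n) '' latticeSet T) = _
  rw [← latticeSet_comp, latDet_latticeSet hGT, latDet_latticeSet hT, LinearMap.det_comp, abs_mul]

theorem critDet_le_latDet (hΛ : IsLattice Λ) (hadm : IsAdmissible Λ K) :
    critDet K ≤ latDet Λ :=
  csInf_le ⟨0, by rintro _ ⟨Λ', _, _, rfl⟩; exact latDet_nonneg Λ'⟩ ⟨Λ, hΛ, hadm, rfl⟩

theorem exists_latDet_lt (hΛ : IsLattice Λ) (hadm : IsAdmissible Λ K) {a : ℝ}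
    (h : critDet K < a) : ∃ Λ', IsLattice Λ' ∧ IsAdmissible Λ' K ∧ latDet Λ' < a := by
  obtain ⟨_, ⟨Λ', hΛ', hadm', rfl⟩, hlt⟩ := exists_lt_of_csInf_lt
    (s := {d | ∃ Λ : Set (Euc n), IsLattice Λ ∧ IsAdmissible Λ K ∧ d = latDet Λ})
    ⟨_, Λ, hΛ, hadm, rfl⟩ h
  exact ⟨Λ', hΛ', hadm', hlt⟩

theorem IsAdmissible.mono (hadm : IsAdmissible Λ K') (h : K ⊆ K') : IsAdmissible Λ K :=
  (Set.inter_subset_inter_right Λ (interior_mono h)).trans hadm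

theorem critDet_mono (hΛ : IsLattice Λ) (hadm : IsAdmissible Λ K') (h : K ⊆ K') :
    critDet K ≤ critDet K' :=
  le_csInf ⟨_, Λ, hΛ, hadm, rfl⟩ <| by
    rintro _ ⟨Λ', hΛ', hadm', rfl⟩
    exact critDet_le_latDet hΛ' (hadm'.mono h)

end Lattice

/-! ### Lattices admissible for the unit ball -/

section UnitBall

variable {n : ℕ} {Λ : Set (Euc n)}

theorem interior_unitBall (n : ℕ) : interior (unitBall n) = ball 0 1 :=
  interior_closedBall _ one_ne_zero

theorem isAdmissible_unitBall_iff :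
    IsAdmissible Λ (unitBall n) ↔ ∀ v ∈ Λ, v ≠ 0 → 1 ≤ ‖v‖ := by
  simp only [IsAdmissible, interior_unitBall, Set.subset_def, Set.mem_inter_iff, mem_ball_zero_iff,
    Set.mem_singleton_iff, and_imp, ne_eq, ← not_lt]
  exact forall₂_congr fun v _ => not_imp_not.symm

theorem minVecs_eq_inter_sphere (hadm : IsAdmissible Λ (unitBall n))
    (hne : (Λ ∩ sphere 0 1).Nonempty) : minVecs Λ = Λ ∩ sphere 0 1 := by
  have hmin : minNorm Λ = 1 := by
    obtain ⟨x, hx, hx1⟩ := hne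
    rw [mem_sphere_zero_iff_norm] at hx1
    refine IsLeast.csInf_eq ⟨⟨x, hx, norm_ne_zero_iff.1 (by simp [hx1]), by simp [hx1]⟩, ?_⟩
    rintro _ ⟨v, hv, hv0, rfl⟩
    exact one_le_pow₀ (isAdmissible_unitBall_iff.1 hadm v hv hv0)
  ext v
  simp only [minVecs, hmin, pow_eq_one_iff_of_nonneg (norm_nonneg _) two_ne_zero]
  refine ⟨fun h => ⟨h.1, mem_sphere_zero_iff_norm.2 h.2.2⟩, fun h => ⟨h.1, ?_, ?_⟩⟩
  · rintro rfl
    simp at h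
  · exact mem_sphere_zero_iff_norm.1 h.2

theorem IsCriticalLattice.image (hΛ : IsCriticalLattice Λ (unitBall n))
    (U : Euc n ≃ₗᵢ[ℝ] Euc n) : IsCriticalLattice (U '' Λ) (unitBall n) := by
  let G : Euc n →L[ℝ] Euc n := U.toContinuousLinearEquiv
  have habs : |G.det| = 1 := by
    rw [ContinuousLinearMap.det, ← LinearMap.normDet_eq_abs_det]
    exact U.toLinearIsometry.normDet_eq_one
  have hG : G.det ≠ 0 := abs_ne_zero.1 (habs ▸ one_ne_zero)
  obtain ⟨hlat, hadm, hdet⟩ := hΛ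
  refine ⟨hlat.image hG, isAdmissible_unitBall_iff.2 ?_, ?_⟩
  · rintro _ ⟨v, hv, rfl⟩ hUv
    rw [U.norm_map]
    exact isAdmissible_unitBall_iff.1 hadm v hv fun h => hUv (by simp [h])
  · exact (hlat.latDet_image hG).trans (by rw [habs, one_mul, hdet])

end UnitBall

/-! ### Reducibility forces redundant extremeness -/

section Forward

variable {n : ℕ} {Λ K : Set (Euc n)} {A : Euc n →L[ℝ] Euc n}

theorem one_le_norm_one_add_apply {v : Euc n} (hv : 0 ≤ ⟪v, A v⟫) (hv1 : 1 ≤ ‖v‖) :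
    1 ≤ ‖(1 + A) v‖ := by
  refine hv1.trans ?_
  rw [← sq_le_sq₀ (norm_nonneg _) (norm_nonneg _), add_apply, one_apply_eq_self,
    norm_add_sq_real]
  nlinarith [sq_nonneg ‖A v‖]

theorem one_le_norm_one_add_apply_of_norm_le {v : Euc n} (hA : ‖A‖ ≤ 1 / 2) (hv : 2 ≤ ‖v‖) :
    1 ≤ ‖(1 + A) v‖ := by
  have hle : ‖A v‖ ≤ 1 / 2 * ‖v‖ := A.le_of_opNorm_le hA v
  calc 1 ≤ ‖v‖ - ‖A v‖ := by linarith
    _ ≤ ‖v + A v‖ := norm_sub_le_norm_add v (A v)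

theorem eventually_notMem_interior (hK : IsClosed K) (hKB : K ⊆ unitBall n) {v : Euc n}
    (hv1 : 1 ≤ ‖v‖) (hv : v ∈ K → 0 ≤ ⟪v, A v⟫) :
    ∀ᶠ t in 𝓝[>] (0 : ℝ), (1 + t • A) v ∉ interior K := by
  by_cases hvK : v ∈ K
  · filter_upwards [self_mem_nhdsWithin] with t ht hmem
    have hlt := interior_mono hKB hmem
    rw [interior_unitBall, mem_ball_zero_iff] at hlt
    refine hlt.not_ge (one_le_norm_one_add_apply ?_ hv1)
    rw [smul_apply, inner_smul_right]
    exact mul_nonneg (Set.mem_Ioi.1 ht).le (hv hvK)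
  · have hlim : Filter.Tendsto (fun t : ℝ => (1 + t • A) v) (𝓝[>] 0) (𝓝 v) := by
      have hcont : Continuous fun t : ℝ => (1 + t • A) v := by fun_prop
      exact (by simpa using hcont.tendsto 0 : Filter.Tendsto _ _ (𝓝 v)).mono_left
        nhdsWithin_le_nhds
    filter_upwards [hlim.eventually (hK.isOpen_compl.mem_nhds hvK)] with t ht hmem
    exact ht (interior_subset hmem)

theorem eventually_norm_smul_le (A : Euc n →L[ℝ] Euc n) :
    ∀ᶠ t in 𝓝[>] (0 : ℝ), ‖t • A‖ ≤ 1 / 2 := by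
  have hcont : Continuous fun t : ℝ => ‖t • A‖ := by fun_prop
  have hlt : ‖(0 : ℝ) • A‖ < 1 / 2 := by
    rw [zero_smul ℝ A, norm_zero]
    norm_num
  exact nhdsWithin_le_nhds ((hcont.tendsto 0).eventually_le_const hlt)

theorem IsLattice.eventually_isAdmissible_image (hΛ : IsLattice Λ)
    (hadm : IsAdmissible Λ (unitBall n)) (hK : IsClosed K) (hKB : K ⊆ unitBall n)
    (hA : ∀ v ∈ Λ ∩ sphere 0 1 ∩ K, 0 ≤ ⟪v, A v⟫) :
    ∀ᶠ t in 𝓝[>] (0 : ℝ), IsAdmissible ((1 + t • A : Euc n →L[ℝ] Euc n) '' Λ) K := by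
  rw [isAdmissible_unitBall_iff] at hadm
  have hshort : ∀ᶠ t in 𝓝[>] (0 : ℝ), ∀ v ∈ Λ ∩ closedBall 0 2,
      v ≠ 0 → (1 + t • A) v ∉ interior K := by
    refine (Filter.eventually_all_finite (hΛ.finite_inter_of_isBounded isBounded_closedBall)).2
      fun v hv => ?_
    by_cases hv0 : v = 0
    · simp [hv0]
    have hv1 := hadm v hv.1 hv0
    filter_upwards [eventually_notMem_interior (A := A) hK hKB hv1 fun hvK =>
      hA v ⟨⟨hv.1, mem_sphere_zero_iff_norm.2 <|
        (mem_closedBall_zero_iff.1 (hKB hvK)).antisymm hv1⟩, hvK⟩] with t ht _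
    exact ht
  filter_upwards [hshort, eventually_norm_smul_le A] with t ht htA
  rintro _ ⟨⟨v, hv, rfl⟩, hmem⟩
  by_contra h0
  have hv0 : v ≠ 0 := fun h => h0 (by simp [h])
  rcases le_or_gt ‖v‖ 2 with hle | hlt
  · exact ht v ⟨hv, mem_closedBall_zero_iff.2 hle⟩ hv0 hmem
  · have hlt1 := interior_mono hKB hmem
    rw [interior_unitBall, mem_ball_zero_iff] at hlt1
    exact hlt1.not_ge (one_le_norm_one_add_apply_of_norm_le htA hlt.le)

-- A descent direction `A` would shrink `Λ` to the `K`-admissible lattice `(1 + t A) Λ`.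
theorem IsCriticalLattice.isDescentFree (hΛ : IsCriticalLattice Λ (unitBall n))
    (hK : IsClosed K) (hKB : K ⊆ unitBall n) (hd : critDet K = critDet (unitBall n)) :
    IsDescentFree (Λ ∩ sphere 0 1 ∩ K) := by
  intro A hA htr hS
  by_contra hA0
  obtain ⟨hlat, hadm, hdet⟩ := hΛ
  let A' : Euc n →L[ℝ] Euc n := A.toContinuousLinearMap
  obtain ⟨t, hadm', hnorm, ht⟩ :=
    ((hlat.eventually_isAdmissible_image (A := A') hadm hK hKB hS).and <|
      (eventually_norm_smul_le A').and self_mem_nhdsWithin).exists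
  replace ht : 0 < t := ht
  have hsymm : ((t • A' : Euc n →L[ℝ] Euc n) : Euc n →ₗ[ℝ] Euc n).IsSymmetric :=
    hA.smul (by simp)
  have hpos : 0 < (1 + t • A').det := det_one_add_pos hsymm (by linarith)
  have hlt : (1 + t • A').det < 1 := by
    refine det_one_add_lt_one hsymm ?_ ?_ (by linarith)
    · exact smul_ne_zero ht.ne' fun h => hA0 (by simpa [A'] using h)
    · change LinearMap.trace ℝ _ (t • A) ≤ 0
      rw [map_smul]
      exact mul_nonpos_of_nonneg_of_nonpos ht.le htr
  have hle := critDet_le_latDet (hlat.image hpos.ne') hadm'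
  rw [hlat.latDet_image hpos.ne', abs_of_pos hpos, hd, ← hdet] at hle
  nlinarith [hlat.latDet_pos]

theorem IsCriticalLattice.isDescentFree_inter_sphere (hΛ : IsCriticalLattice Λ (unitBall n)) :
    IsDescentFree (Λ ∩ sphere 0 1) :=
  (hΛ.isDescentFree isClosed_closedBall subset_rfl rfl).mono Set.inter_subset_left

theorem IsCriticalLattice.minVecs_eq [NeZero n] (hΛ : IsCriticalLattice Λ (unitBall n)) :
    minVecs Λ = Λ ∩ sphere 0 1 := by
  refine minVecs_eq_inter_sphere hΛ.2.1 (Set.nonempty_iff_ne_empty.2 fun hempty => ?_)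
  have hdf := hΛ.isDescentFree_inter_sphere
  rw [hempty] at hdf
  have hid : (-LinearMap.id : Euc n →ₗ[ℝ] Euc n) = 0 := by
    refine hdf _ ?_ ?_ (by simp)
    · intro x y
      simp
    · simp
  have := congrArg (· (EuclideanSpace.single (0 : Fin n) (1 : ℝ))) hid
  simp at this

theorem IsLattice.finite_inter_sphere (hΛ : IsLattice Λ) : (Λ ∩ sphere 0 1).Finite :=
  hΛ.finite_inter_of_isBounded isBounded_sphere

theorem IsLattice.neg_mem_inter_sphere (hΛ : IsLattice Λ) :
    ∀ x ∈ Λ ∩ sphere 0 1, -x ∈ Λ ∩ sphere 0 1 := fun x hx =>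
  ⟨hΛ.neg_mem hx.1, by simpa using hx.2⟩

theorem IsSymCB.exists_norm_eq_one_notMem [NeZero n] (hK : IsSymCB K) (hKB : K ⊆ unitBall n)
    (hne : K ≠ unitBall n) : ∃ z : Euc n, ‖z‖ = 1 ∧ z ∉ K := by
  by_contra! hall
  refine hne (hKB.antisymm ?_)
  rw [unitBall, ← convexHull_sphere_eq_closedBall _ zero_le_one]
  exact convexHull_min (fun z hz => hall z (mem_sphere_zero_iff_norm.1 hz)) hK.convex

-- Rotating `Λ` so that `x` leaves `K` shows that `S(Λ) ∖ {x, -x}` already blocks every descent.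
theorem IsCriticalLattice.isDescentFree_diff_pair (hΛ : IsCriticalLattice Λ (unitBall n))
    (hK : IsSymCB K) (hKB : K ⊆ unitBall n) (hd : critDet K = critDet (unitBall n))
    {x z : Euc n} (hx : ‖x‖ = 1) (hz : ‖z‖ = 1) (hzK : z ∉ K) :
    IsDescentFree ((Λ ∩ sphere 0 1) \ {x, -x}) := by
  let U := (ℝ ∙ (x - z))ᗮ.reflection
  have hUx : U x = z := Submodule.reflection_sub (hx.trans hz.symm)
  have hnegz : -z ∉ K := fun h => hzK (by rwa [← hK.symm, Set.mem_neg])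
  have hsub : U '' Λ ∩ sphere 0 1 ∩ K ⊆ U '' ((Λ ∩ sphere 0 1) \ {x, -x}) := by
    rintro _ ⟨⟨⟨v, hv, rfl⟩, hv1⟩, hvK⟩
    refine ⟨v, ⟨⟨hv, by simpa using hv1⟩, ?_⟩, rfl⟩
    rintro (rfl | rfl)
    · exact hzK (hUx ▸ hvK)
    · exact hnegz (by rwa [map_neg, hUx] at hvK)
  have hdf := (((hΛ.image U).isDescentFree hK.compact.isClosed hKB hd).mono hsub).image U.symm
  rwa [← Set.image_comp, U.symm_comp_self, Set.image_id] at hdf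

/-- A body is reducible if some smaller symmetric convex body has the same critical determinant. -/
def IsReducible (K : Set (Euc n)) : Prop :=
  ∃ K' : Set (Euc n), IsSymCB K' ∧ K' ⊆ K ∧ K' ≠ K ∧ critDet K' = critDet K

theorem IsReducible.isRedundantlyExtremeCfg_minVecs [NeZero n] (h : IsReducible (unitBall n))
    (hΛ : IsCriticalLattice Λ (unitBall n)) : IsRedundantlyExtremeCfg (minVecs Λ) := by
  obtain ⟨K, hK, hKB, hne, hd⟩ := h
  obtain ⟨z, hz, hzK⟩ := hK.exists_norm_eq_one_notMem hKB hne
  rw [hΛ.minVecs_eq,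
    isRedundantlyExtremeCfg_iff hΛ.1.finite_inter_sphere hΛ.1.neg_mem_inter_sphere]
  exact ⟨hΛ.isDescentFree_inter_sphere, fun x hx =>
    hΛ.isDescentFree_diff_pair hK hKB hd (mem_sphere_zero_iff_norm.1 hx.2) hz hzK⟩

theorem forall_isCriticalLattice_isRedundantlyExtremeCfg_iff [NeZero n]
    (hΛ : IsCriticalLattice Λ (unitBall n))
    (huniq : ∀ Λ', IsCriticalLattice Λ' (unitBall n) → ∃ U : Euc n ≃ₗᵢ[ℝ] Euc n, Λ' = U '' Λ) :
    (∀ Λ', IsCriticalLattice Λ' (unitBall n) → IsRedundantlyExtremeCfg (minVecs Λ')) ↔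
      IsRedundantlyExtremeCfg (minVecs Λ) := by
  refine ⟨fun h => h Λ hΛ, fun h Λ' hΛ' => ?_⟩
  obtain ⟨U, rfl⟩ := huniq Λ' hΛ'
  have himage : U '' Λ ∩ sphere 0 1 = U '' (Λ ∩ sphere 0 1) := by
    rw [Set.image_inter U.injective, U.image_sphere, map_zero]
  rw [hΛ.minVecs_eq] at h
  rw [hΛ'.minVecs_eq, himage]
  exact h.image hΛ.1.finite_inter_sphere hΛ.1.neg_mem_inter_sphere U

end Forward

/-! ### Reduced bases and Mahler's compactness theorem -/

section ReducedBasis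

variable {F : Type*} [NormedAddCommGroup F] {L : Submodule ℤ F} {v : F}

/-- `v` is a nonzero vector of `L` whose length is within the factor `6/5` of the infimum; unlike
a shortest vector it exists without compactness. -/
structure IsAlmostShortest (L : Submodule ℤ F) (v : F) : Prop where
  mem : v ∈ L
  ne_zero : v ≠ 0
  norm_le : ∀ w ∈ L, w ≠ 0 → ‖v‖ ≤ 6 / 5 * ‖w‖

theorem exists_isAlmostShortest {r : ℝ} (hr : 0 < r) (hmin : ∀ w ∈ L, w ≠ 0 → r ≤ ‖w‖)
    (hL : L ≠ ⊥) : ∃ v, IsAlmostShortest L v := by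
  let N : Set ℝ := norm '' {w | w ∈ L ∧ w ≠ 0}
  have hne : N.Nonempty := by
    obtain ⟨w, hw, hw0⟩ := L.exists_mem_ne_zero_of_ne_bot hL
    exact ⟨_, w, ⟨hw, hw0⟩, rfl⟩
  have hlower : r ∈ lowerBounds N := by
    rintro _ ⟨w, hw, rfl⟩
    exact hmin w hw.1 hw.2
  have hpos : 0 < sInf N := hr.trans_le (le_csInf hne hlower)
  obtain ⟨_, ⟨v, hv, rfl⟩, hlt⟩ := exists_lt_of_csInf_lt hne (by linarith : sInf N < 6 / 5 * sInf N)
  refine ⟨v, hv.1, hv.2, fun w hw hw0 => hlt.le.trans ?_⟩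
  gcongr
  exact csInf_le ⟨r, hlower⟩ ⟨w, ⟨hw, hw0⟩, rfl⟩

variable [InnerProductSpace ℝ F]

/-- The image of `L` under the orthogonal projection along `v`. -/
def projectedLattice (L : Submodule ℤ F) (v : F) : Submodule ℤ (ℝ ∙ v)ᗮ :=
  L.map (((ℝ ∙ v)ᗮ.orthogonalProjectionOnto : F →ₗ[ℝ] (ℝ ∙ v)ᗮ).restrictScalars ℤ)

/-- `c` is a `ℤ`-basis of `L` which is upper triangular with respect to the orthonormal basis `e`,
has diagonal entries at least `q`, and is size-reduced: each row is dominated by its diagonal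
entry. It plays the role of a Hermite–Korkine–Zolotarev reduced basis. -/
structure IsReducedBasis {d : ℕ} (L : Submodule ℤ F) (q : ℝ) (c : Fin d → F)
    (e : OrthonormalBasis (Fin d) ℝ F) : Prop where
  span_eq : Submodule.span ℤ (Set.range c) = L
  inner_eq_zero : ∀ i j, j < i → ⟪e i, c j⟫ = 0
  le_inner_self : ∀ i, q ≤ ⟪e i, c i⟫
  abs_inner_le : ∀ i j, i < j → |⟪e i, c j⟫| ≤ ⟪e i, c i⟫

theorem norm_sq_eq_inner_div_norm_sq_add (v u : F) :
    ‖u‖ ^ 2 = (⟪v, u⟫ / ‖v‖) ^ 2 + ‖(ℝ ∙ v)ᗮ.orthogonalProjectionOnto u‖ ^ 2 := by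
  rw [Submodule.norm_sq_eq_add_norm_sq_projection u (ℝ ∙ v)]
  congr 1
  rw [Submodule.coe_norm, ← Submodule.starProjection_apply, Submodule.starProjection_singleton,
    norm_smul, mul_pow, Real.norm_eq_abs, sq_abs]
  simp only [RCLike.ofReal_real_eq_id, id_eq]
  rcases eq_or_ne v 0 with rfl | hv
  · simp
  · field_simp [norm_ne_zero_iff.2 hv]

theorem exists_int_abs_inner_sub_zsmul_le (v u : F) :
    ∃ k : ℤ, |⟪v, u - k • v⟫| ≤ ‖v‖ ^ 2 / 2 := by
  rcases eq_or_ne v 0 with rfl | hv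
  · exact ⟨0, by simp⟩
  have hv2 : 0 < ‖v‖ ^ 2 := by positivity
  refine ⟨round (⟪v, u⟫ / ‖v‖ ^ 2), ?_⟩
  have heq : ⟪v, u - round (⟪v, u⟫ / ‖v‖ ^ 2) • v⟫ =
      (⟪v, u⟫ / ‖v‖ ^ 2 - round (⟪v, u⟫ / ‖v‖ ^ 2)) * ‖v‖ ^ 2 := by
    rw [inner_sub_right, ← Int.cast_smul_eq_zsmul ℝ, inner_smul_right,
      real_inner_self_eq_norm_sq, sub_mul, div_mul_cancel₀ _ hv2.ne']
  rw [heq, abs_mul, abs_of_pos hv2]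
  nlinarith [abs_sub_round (⟪v, u⟫ / ‖v‖ ^ 2)]

theorem orthogonalProjectionOnto_sub_zsmul (v u : F) (k : ℤ) :
    (ℝ ∙ v)ᗮ.orthogonalProjectionOnto (u - k • v) = (ℝ ∙ v)ᗮ.orthogonalProjectionOnto u := by
  rw [map_sub, map_zsmul, Submodule.orthogonalProjectionOnto_apply_of_mem_orthogonal
    (Submodule.le_orthogonal_orthogonal _ (Submodule.mem_span_singleton_self v)),
    smul_zero, sub_zero]

theorem exists_mem_projection_eq_and_abs_inner_le (hv : v ∈ L) {w : (ℝ ∙ v)ᗮ}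
    (hw : w ∈ projectedLattice L v) :
    ∃ u ∈ L, (ℝ ∙ v)ᗮ.orthogonalProjectionOnto u = w ∧ |⟪v, u⟫| ≤ ‖v‖ ^ 2 / 2 := by
  obtain ⟨u, hu, huw⟩ := hw
  obtain ⟨k, hk⟩ := exists_int_abs_inner_sub_zsmul_le v u
  exact ⟨u - k • v, L.sub_mem hu (L.smul_mem k hv),
    (orthogonalProjectionOnto_sub_zsmul v u k).trans huw, hk⟩

-- Moving `u` within its coset of `ℤ v` brings it to within `‖v‖ / 2` of the projection.
theorem IsAlmostShortest.eq_zsmul_or_le_norm_projection (hv : IsAlmostShortest L v) {u : F}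
    (hu : u ∈ L) : (∃ k : ℤ, u = k • v) ∨ ‖v‖ / 2 ≤ ‖(ℝ ∙ v)ᗮ.orthogonalProjectionOnto u‖ := by
  obtain ⟨k, hk⟩ := exists_int_abs_inner_sub_zsmul_le v u
  by_cases h0 : u - k • v = 0
  · exact .inl ⟨k, sub_eq_zero.1 h0⟩
  right
  have hpos : 0 < ‖v‖ := norm_pos_iff.2 hv.ne_zero
  have hle := hv.norm_le _ (L.sub_mem hu (L.smul_mem k hv.mem)) h0
  have hnorm := norm_sq_eq_inner_div_norm_sq_add v (u - k • v)
  rw [orthogonalProjectionOnto_sub_zsmul] at hnorm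
  have hinner : (⟪v, u - k • v⟫ / ‖v‖) ^ 2 ≤ (‖v‖ / 2) ^ 2 := by
    refine sq_le_sq' ?_ ?_ <;>
      [rw [le_div_iff₀ hpos]; rw [div_le_iff₀ hpos]] <;> nlinarith [abs_le.1 hk]
  refine le_of_sq_le_sq ?_ (norm_nonneg _)
  nlinarith

theorem IsAlmostShortest.span_vecCons_eq (hv : IsAlmostShortest L v) {d : ℕ} {u : Fin d → F}
    (hu : ∀ j, u j ∈ L)
    (hspan : Submodule.span ℤ (Set.range fun j => (ℝ ∙ v)ᗮ.orthogonalProjectionOnto (u j)) =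
      projectedLattice L v) :
    Submodule.span ℤ (Set.range (Matrix.vecCons v u)) = L := by
  let p : F →ₗ[ℤ] (ℝ ∙ v)ᗮ :=
    ((ℝ ∙ v)ᗮ.orthogonalProjectionOnto : F →ₗ[ℝ] (ℝ ∙ v)ᗮ).restrictScalars ℤ
  have hpos : 0 < ‖v‖ := norm_pos_iff.2 hv.ne_zero
  rw [Matrix.range_cons, Set.singleton_union]
  refine (Submodule.span_le.2 ?_).antisymm fun w hw => ?_
  · rintro _ (rfl | ⟨j, rfl⟩)
    exacts [hv.mem, hu j]
  · have hpw : p w ∈ (Submodule.span ℤ (Set.range u)).map p := by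
      rw [Submodule.map_span, ← Set.range_comp]
      exact hspan ▸ Submodule.mem_map_of_mem hw
    obtain ⟨y, hy, hyw⟩ := hpw
    have hyL : y ∈ L := Submodule.span_le.2 (Set.range_subset_iff.2 hu) hy
    have hker : (ℝ ∙ v)ᗮ.orthogonalProjectionOnto (w - y) = 0 := by
      rw [map_sub, sub_eq_zero]
      exact hyw.symm
    rcases hv.eq_zsmul_or_le_norm_projection (L.sub_mem hw hyL) with ⟨k, hk⟩ | hle
    · exact Submodule.mem_span_insert.2 ⟨k, y, hy, by rw [← hk, sub_add_cancel]⟩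
    · rw [hker, norm_zero] at hle
      linarith

theorem exists_orthonormalBasis_extending [FiniteDimensional ℝ F] {d : ℕ}
    (hd : Module.finrank ℝ F = d + 1) (hv : v ≠ 0) (e' : OrthonormalBasis (Fin d) ℝ (ℝ ∙ v)ᗮ) :
    ∃ e : OrthonormalBasis (Fin (d + 1)) ℝ F,
      e 0 = ‖v‖⁻¹ • v ∧ ∀ i : Fin d, e i.succ = (e' i : F) := by
  have hortho : Orthonormal ℝ (Matrix.vecCons (‖v‖⁻¹ • v) fun i => (e' i : F)) := by
    refine orthonormal_vecCons_iff.2 ⟨norm_smul_inv_norm hv, fun i => ?_,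
      e'.orthonormal.comp_linearIsometry (ℝ ∙ v)ᗮ.subtypeₗᵢ⟩
    rw [inner_smul_left, Submodule.mem_orthogonal_singleton_iff_inner_right.1 (e' i).2, mul_zero]
  obtain ⟨e, he⟩ := Orthonormal.exists_orthonormalBasis_extension_of_card_eq (𝕜 := ℝ)
    (by rw [hd, Fintype.card_fin]) (s := Set.univ) (hortho.comp _ Subtype.val_injective)
  exact ⟨e, he 0 (Set.mem_univ _), fun i => he i.succ (Set.mem_univ _)⟩

theorem IsReducedBasis.cons [FiniteDimensional ℝ F] {d : ℕ} {q : ℝ}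
    (hd : Module.finrank ℝ F = d + 1) (hv : IsAlmostShortest L v) (hq : q ≤ ‖v‖)
    {c' : Fin d → (ℝ ∙ v)ᗮ} {e' : OrthonormalBasis (Fin d) ℝ (ℝ ∙ v)ᗮ}
    (hc' : IsReducedBasis (projectedLattice L v) q c' e') :
    ∃ c e, IsReducedBasis (d := d + 1) L q c e := by
  choose u huL huc huv using fun j => exists_mem_projection_eq_and_abs_inner_le hv.mem
    (hc'.span_eq ▸ Submodule.subset_span ⟨j, rfl⟩ : c' j ∈ projectedLattice L v)
  obtain ⟨e, he_zero, he_succ⟩ := exists_orthonormalBasis_extending hd hv.ne_zero e'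
  have hpos : 0 < ‖v‖ := norm_pos_iff.2 hv.ne_zero
  have hinner_zero (w : F) : ⟪e 0, w⟫ = ⟪v, w⟫ / ‖v‖ := by
    rw [he_zero, real_inner_smul_left, inv_mul_eq_div]
  have hinner_zero_v : ⟪e 0, v⟫ = ‖v‖ := by
    rw [hinner_zero, real_inner_self_eq_norm_sq, pow_two, mul_div_cancel_right₀ _ hpos.ne']
  have hinner_zero_u (j : Fin d) : |⟪e 0, u j⟫| ≤ ‖v‖ := by
    rw [hinner_zero, abs_div, abs_norm, div_le_iff₀ hpos]
    nlinarith [huv j]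
  have hinner_succ_v (i : Fin d) : ⟪e i.succ, v⟫ = 0 := by
    rw [he_succ, Submodule.mem_orthogonal_singleton_iff_inner_left.1 (e' i).2]
  have hinner_succ_u (i j : Fin d) : ⟪e i.succ, u j⟫ = ⟪e' i, c' j⟫ := by
    rw [he_succ, ← huc, Submodule.inner_orthogonalProjectionOnto_eq_of_mem_left]
  refine ⟨Matrix.vecCons v u, e, hv.span_vecCons_eq huL ?_, ?_, ?_, ?_⟩
  · simpa only [huc] using hc'.span_eq
  · intro i j hji
    cases i using Fin.cases with
    | zero => exact absurd hji (Fin.not_lt_zero j)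
    | succ i =>
      cases j using Fin.cases with
      | zero => exact hinner_succ_v i
      | succ j =>
        exact (hinner_succ_u i j).trans (hc'.inner_eq_zero i j (Fin.succ_lt_succ_iff.1 hji))
  · refine Fin.cases (hq.trans_eq hinner_zero_v.symm) fun i => ?_
    exact (hc'.le_inner_self i).trans_eq (hinner_succ_u i i).symm
  · intro i j hij
    cases j using Fin.cases with
    | zero => exact absurd hij (Fin.not_lt_zero i)
    | succ j =>
      cases i using Fin.cases with
      | zero => exact (hinner_zero_u j).trans_eq hinner_zero_v.symm
      | succ i =>
        simpa only [Matrix.cons_val_succ, hinner_succ_u] using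
          hc'.abs_inner_le i j (Fin.succ_lt_succ_iff.1 hij)

theorem span_projectedLattice (hL : Submodule.span ℝ (L : Set F) = ⊤) :
    Submodule.span ℝ (projectedLattice L v : Set (ℝ ∙ v)ᗮ) = ⊤ := by
  have hset : (projectedLattice L v : Set (ℝ ∙ v)ᗮ) =
      ((ℝ ∙ v)ᗮ.orthogonalProjectionOnto : F →ₗ[ℝ] (ℝ ∙ v)ᗮ) '' L := rfl
  rw [hset, Submodule.span_image, hL, Submodule.map_top, LinearMap.range_eq_top]
  exact fun w => ⟨w, Submodule.orthogonalProjectionOnto_mem_subspace_eq_self w⟩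

theorem IsAlmostShortest.le_norm_of_mem_projectedLattice (hv : IsAlmostShortest L v)
    {w : (ℝ ∙ v)ᗮ} (hw : w ∈ projectedLattice L v) (hw0 : w ≠ 0) : ‖v‖ / 2 ≤ ‖w‖ := by
  obtain ⟨u, hu, rfl⟩ := hw
  refine (hv.eq_zsmul_or_le_norm_projection hu).resolve_left ?_
  rintro ⟨k, rfl⟩
  refine hw0 ?_
  simpa using orthogonalProjectionOnto_sub_zsmul v 0 (-k)

theorem exists_isReducedBasis {d : ℕ} [FiniteDimensional ℝ F] (hd : Module.finrank ℝ F = d)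
    (hL : Submodule.span ℝ (L : Set F) = ⊤) {r : ℝ} (hr : 0 < r)
    (hmin : ∀ w ∈ L, w ≠ 0 → r ≤ ‖w‖) : ∃ c e, IsReducedBasis (d := d) L (r / 2 ^ d) c e := by
  induction d generalizing F r with
  | zero =>
    have : Subsingleton F := Module.finrank_zero_iff.1 hd
    refine ⟨finZeroElim, (stdOrthonormalBasis ℝ F).reindex (finCongr hd),
      Subsingleton.elim _ _, finZeroElim, finZeroElim, finZeroElim⟩
  | succ d ih =>
    have hL0 : L ≠ ⊥ := by
      rintro rfl
      have hF : (⊥ : Submodule ℝ F) = ⊤ := by simpa using hL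
      rw [← finrank_top ℝ F, ← hF, finrank_bot] at hd
      omega
    obtain ⟨v, hv⟩ := exists_isAlmostShortest hr hmin hL0
    have hrv : r ≤ ‖v‖ := hmin v hv.mem hv.ne_zero
    have : Fact (Module.finrank ℝ F = d + 1) := ⟨hd⟩
    obtain ⟨c', e', hc'⟩ := ih (L := projectedLattice L v) (r := r / 2)
      (Submodule.finrank_orthogonal_span_singleton hv.ne_zero) (span_projectedLattice hL)
      (half_pos hr) fun w hw hw0 =>
        (div_le_div_of_nonneg_right hrv two_pos.le).trans
          (hv.le_norm_of_mem_projectedLattice hw hw0)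
    rw [div_div, ← pow_succ'] at hc'
    exact hc'.cons hd hv ((div_le_self hr.le (one_le_pow₀ one_le_two)).trans hrv)

namespace IsReducedBasis

variable {d : ℕ} {q : ℝ} {c : Fin d → F} {e : OrthonormalBasis (Fin d) ℝ F}

theorem abs_det_eq_prod [FiniteDimensional ℝ F] (hc : IsReducedBasis L q c e) (hq : 0 ≤ q)
    {T : F →ₗ[ℝ] F} {b : OrthonormalBasis (Fin d) ℝ F} (hT : ∀ j, T (b j) = c j) :
    |LinearMap.det T| = ∏ i, ⟪e i, c i⟫ := by
  have hentry (i j : Fin d) : T.toMatrix b.toBasis e.toBasis i j = ⟪e i, c j⟫ := by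
    simp [LinearMap.toMatrix_apply, OrthonormalBasis.repr_apply_apply, hT]
  have hupper : (T.toMatrix b.toBasis e.toBasis).IsUpperTriangular := fun i j hji =>
    (hentry i j).trans (hc.inner_eq_zero i j hji)
  rw [← LinearMap.normDet_eq_abs_det, LinearMap.normDet_eq_norm_det_toMatrix T b e,
    Matrix.det_of_isUpperTriangular hupper, Real.norm_eq_abs, Finset.abs_prod]
  refine Finset.prod_congr rfl fun i _ => ?_
  rw [hentry, abs_of_nonneg (hq.trans (hc.le_inner_self i))]

theorem pow_le_prod (hc : IsReducedBasis L q c e) (hq : 0 ≤ q) : q ^ d ≤ ∏ i, ⟪e i, c i⟫ := by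
  calc q ^ d = ∏ _i : Fin d, q := by rw [Finset.prod_const, Finset.card_univ, Fintype.card_fin]
    _ ≤ ∏ i, ⟪e i, c i⟫ := Finset.prod_le_prod (fun _ _ => hq) fun i _ => hc.le_inner_self i

theorem inner_self_le (hc : IsReducedBasis L q c e) (hq : 0 < q) (i : Fin d) :
    ⟪e i, c i⟫ ≤ (∏ j, ⟪e j, c j⟫) / q ^ (d - 1) := by
  rw [le_div_iff₀ (by positivity), ← Finset.mul_prod_erase _ _ (Finset.mem_univ i)]
  have hpow : q ^ (d - 1) = ∏ _j ∈ Finset.univ.erase i, q := by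
    simp [Finset.card_erase_of_mem]
  rw [hpow]
  exact mul_le_mul_of_nonneg_left
    (Finset.prod_le_prod (fun _ _ => hq.le) fun j _ => hc.le_inner_self j)
    (hq.le.trans (hc.le_inner_self i))

theorem norm_le (hc : IsReducedBasis L q c e) (hq : 0 < q) (j : Fin d) :
    ‖c j‖ ≤ d * ((∏ i, ⟪e i, c i⟫) / q ^ (d - 1)) := by
  have hentry (i : Fin d) : |⟪e i, c j⟫| ≤ ⟪e i, c i⟫ := by
    have hdiag : 0 ≤ ⟪e i, c i⟫ := hq.le.trans (hc.le_inner_self i)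
    rcases lt_trichotomy i j with hij | rfl | hji
    · exact hc.abs_inner_le i j hij
    · rw [abs_of_nonneg hdiag]
    · rwa [hc.inner_eq_zero i j hji, abs_zero]
  calc ‖c j‖ = ‖∑ i, ⟪e i, c j⟫ • e i‖ := by rw [e.sum_repr' (c j)]
    _ ≤ ∑ i, ‖⟪e i, c j⟫ • e i‖ := norm_sum_le _ _
    _ = ∑ i, |⟪e i, c j⟫| := by simp only [norm_smul, e.norm_eq_one, mul_one, Real.norm_eq_abs]
    _ ≤ ∑ _i : Fin d, (∏ k, ⟪e k, c k⟫) / q ^ (d - 1) :=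
      Finset.sum_le_sum fun i _ => (hentry i).trans (hc.inner_self_le hq i)
    _ = d * ((∏ i, ⟪e i, c i⟫) / q ^ (d - 1)) := by
      rw [Finset.sum_const, Finset.card_univ, Fintype.card_fin, nsmul_eq_mul]

end IsReducedBasis

end ReducedBasis

section Mahler

variable {n : ℕ} {Λ : Set (Euc n)}

/-- The linear map sending the standard basis of `ℝⁿ` to the vectors `c`. -/
def ofColumns (n : ℕ) : (Fin n → Euc n) →ₗ[ℝ] Euc n →L[ℝ] Euc n :=
  (LinearMap.toContinuousLinearMap : (Euc n →ₗ[ℝ] Euc n) ≃ₗ[ℝ] Euc n →L[ℝ] Euc n) ∘ₗ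
    ((EuclideanSpace.basisFun (Fin n) ℝ).toBasis.constr ℝ).toLinearMap

theorem ofColumns_single (c : Fin n → Euc n) (j : Fin n) :
    ofColumns n c (EuclideanSpace.single j 1) = c j := by
  rw [← EuclideanSpace.basisFun_apply, ← OrthonormalBasis.coe_toBasis]
  exact (EuclideanSpace.basisFun (Fin n) ℝ).toBasis.constr_basis ℝ c j

theorem IsLattice.span_eq_top {L : Submodule ℤ (Euc n)} (hL : IsLattice (L : Set (Euc n))) :
    Submodule.span ℝ (L : Set (Euc n)) = ⊤ := by
  obtain ⟨T, hT, hLT⟩ := hL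
  rw [hLT, latticeSet_eq_span, Submodule.span_span_of_tower]
  have hrange : Set.range (fun i => T (EuclideanSpace.single i 1)) =
      T '' Set.range (EuclideanSpace.basisFun (Fin n) ℝ).toBasis := by
    rw [← Set.range_comp]
    congr 1 with i : 1
    simp
  rw [hrange, Submodule.span_image, Module.Basis.span_eq, Submodule.map_top, LinearMap.range_eq_top]
  exact (LinearMap.equivOfDetNeZero T hT).surjective

theorem exists_latticeSet_ofColumns_eq {r : ℝ} (hr : 0 < r) (hΛ : IsLattice Λ)
    (hmin : ∀ v ∈ Λ, v ≠ 0 → r ≤ ‖v‖) :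
    ∃ c : Fin n → Euc n, latticeSet (ofColumns n c : Euc n →ₗ[ℝ] Euc n) = Λ ∧
      (r / 2 ^ n) ^ n ≤ |(ofColumns n c).det| ∧
      ∀ j, ‖c j‖ ≤ n * (latDet Λ / (r / 2 ^ n) ^ (n - 1)) := by
  obtain ⟨L, rfl⟩ := hΛ.exists_eq_submodule
  obtain ⟨c, e, hc⟩ := exists_isReducedBasis finrank_euclideanSpace_fin hΛ.span_eq_top hr hmin
  have hq : 0 < r / 2 ^ n := by positivity
  have hlat : latticeSet (ofColumns n c : Euc n →ₗ[ℝ] Euc n) = L := by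
    rw [latticeSet_eq_span, ← hc.span_eq]
    simp only [ContinuousLinearMap.coe_coe, ofColumns_single]
  have hprod : |(ofColumns n c).det| = ∏ i, ⟪e i, c i⟫ :=
    hc.abs_det_eq_prod hq.le (b := EuclideanSpace.basisFun (Fin n) ℝ) fun j => by
      rw [EuclideanSpace.basisFun_apply, ContinuousLinearMap.coe_coe, ofColumns_single]
  have hpow : (r / 2 ^ n) ^ n ≤ |(ofColumns n c).det| := hprod ▸ hc.pow_le_prod hq.le
  have hdet : latDet (L : Set (Euc n)) = ∏ i, ⟪e i, c i⟫ := by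
    rw [← hprod, ← hlat]
    exact latDet_latticeSet (abs_pos.1 ((pow_pos hq n).trans_le hpow))
  exact ⟨c, hlat, hpow, fun j => hdet ▸ hc.norm_le hq j⟩

theorem exists_tendsto_latticeSet_eq {r D : ℝ} (hr : 0 < r) {Λ : ℕ → Set (Euc n)}
    (hΛ : ∀ k, IsLattice (Λ k)) (hmin : ∀ k, ∀ v ∈ Λ k, v ≠ 0 → r ≤ ‖v‖)
    (hdet : ∀ k, latDet (Λ k) ≤ D) :
    ∃ φ : ℕ → ℕ, StrictMono φ ∧ ∃ (T : ℕ → Euc n →L[ℝ] Euc n) (T' : Euc n →L[ℝ] Euc n),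
      (∀ k, latticeSet (T k : Euc n →ₗ[ℝ] Euc n) = Λ (φ k)) ∧ T'.det ≠ 0 ∧
        Filter.Tendsto T Filter.atTop (𝓝 T') := by
  choose c hlat hlow hnorm using fun k => exists_latticeSet_ofColumns_eq hr (hΛ k) (hmin k)
  have hD : 0 ≤ D := (latDet_nonneg _).trans (hdet 0)
  have hbounded (k : ℕ) : c k ∈ closedBall 0 (n * (D / (r / 2 ^ n) ^ (n - 1))) := by
    rw [mem_closedBall_zero_iff, pi_norm_le_iff_of_nonneg (by positivity)]
    intro j
    refine (hnorm k j).trans ?_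
    gcongr
    exact hdet k
  obtain ⟨c', -, φ, hφ, hlim⟩ := (isCompact_closedBall _ _).tendsto_subseq hbounded
  have hT : Filter.Tendsto (fun k => ofColumns n (c (φ k))) Filter.atTop (𝓝 (ofColumns n c')) :=
    ((ofColumns n).continuous_of_finiteDimensional.tendsto c').comp hlim
  have hpos : (r / 2 ^ n) ^ n ≤ |(ofColumns n c').det| :=
    ge_of_tendsto' ((ContinuousLinearMap.continuous_det.tendsto _).comp hT).abs fun k => hlow (φ k)
  exact ⟨φ, hφ, _, _, fun k => hlat (φ k),
    abs_pos.1 ((by positivity : 0 < (r / 2 ^ n) ^ n).trans_le hpos), hT⟩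

theorem mahler_compactness {r D : ℝ} (hr : 0 < r) {Λ : ℕ → Set (Euc n)}
    (hΛ : ∀ k, IsLattice (Λ k)) (hmin : ∀ k, ∀ v ∈ Λ k, v ≠ 0 → r ≤ ‖v‖)
    (hdet : ∀ k, latDet (Λ k) ≤ D) :
    ∃ φ : ℕ → ℕ, StrictMono φ ∧ ∃ (Λ' : Set (Euc n)) (G : ℕ → Euc n →L[ℝ] Euc n),
      IsLattice Λ' ∧ (∀ k, G k '' Λ' = Λ (φ k)) ∧ Filter.Tendsto G Filter.atTop (𝓝 1) := by
  obtain ⟨φ, hφ, T, T', hlat, hT', hT⟩ := exists_tendsto_latticeSet_eq hr hΛ hmin hdet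
  let e : Euc n ≃L[ℝ] Euc n :=
    (LinearMap.equivOfDetNeZero (T' : Euc n →ₗ[ℝ] Euc n) hT').toContinuousLinearEquiv
  refine ⟨φ, hφ, _, fun k => T k ∘L e.symm, ⟨T', hT', rfl⟩, fun k => ?_, ?_⟩
  · have hcomp : ((T k ∘L e.symm : Euc n →L[ℝ] Euc n) : Euc n →ₗ[ℝ] Euc n) ∘ₗ
        (T' : Euc n →ₗ[ℝ] Euc n) = T k := by
      ext1 x
      exact congrArg (T k) (e.symm_apply_apply x)
    rw [← hlat, ← ContinuousLinearMap.coe_coe, ← latticeSet_comp, hcomp]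
  · have hone : T' ∘L (e.symm : Euc n →L[ℝ] Euc n) = 1 := by
      ext1 x
      exact e.apply_symm_apply x
    rw [← hone]
    exact ((continuous_id.clm_comp continuous_const).tendsto T').comp hT

end Mahler

/-! ### Truncated balls -/

section TruncatedBall

variable {n : ℕ} {Λ : Set (Euc n)} {u v w y : Euc n} {ε : ℝ}

/-- The unit ball with its two antipodal caps of height `ε` around the axis `u` cut off. -/
def truncatedBall (u : Euc n) (ε : ℝ) : Set (Euc n) :=
  unitBall n ∩ {y | |⟪y, u⟫| ≤ 1 - ε}

theorem truncatedBall_subset_unitBall (u : Euc n) (ε : ℝ) : truncatedBall u ε ⊆ unitBall n :=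
  Set.inter_subset_left

theorem truncatedBall_anti (u : Euc n) {δ : ℝ} (h : ε ≤ δ) :
    truncatedBall u δ ⊆ truncatedBall u ε :=
  Set.inter_subset_inter_right _ fun _ hy => le_trans hy (sub_le_sub_left h 1)

theorem mem_interior_truncatedBall (hy : ‖y‖ < 1) (hyu : |⟪y, u⟫| < 1 - ε) :
    y ∈ interior (truncatedBall u ε) := by
  rw [truncatedBall, interior_inter, interior_unitBall]
  have hopen : IsOpen {z : Euc n | |⟪z, u⟫| < 1 - ε} := isOpen_lt (by fun_prop) continuous_const
  have hsub : {z : Euc n | |⟪z, u⟫| < 1 - ε} ⊆ {z | |⟪z, u⟫| ≤ 1 - ε} :=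
    fun z (hz : |⟪z, u⟫| < 1 - ε) => hz.le
  exact ⟨mem_ball_zero_iff.2 hy, interior_maximal hsub hopen hyu⟩

theorem isSymCB_truncatedBall (u : Euc n) (hε : ε < 1) : IsSymCB (truncatedBall u ε) where
  convex := by
    refine (convex_closedBall _ _).inter ?_
    have hpre : {y : Euc n | |⟪y, u⟫| ≤ 1 - ε} =
        innerₗ (Euc n) u ⁻¹' Set.Icc (-(1 - ε)) (1 - ε) := by
      ext y
      simp [abs_le, real_inner_comm u]
    rw [hpre]
    exact (convex_Icc _ _).linear_preimage _
  compact := (isCompact_closedBall _ _).inter_right (isClosed_le (by fun_prop) continuous_const)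
  nonempty_interior := ⟨0, mem_interior_truncatedBall (by simp) (by simpa using hε)⟩
  symm := by
    ext y
    simp [truncatedBall, unitBall]

theorem truncatedBall_ne_unitBall (hu : ‖u‖ = 1) (hε : 0 < ε) : truncatedBall u ε ≠ unitBall n := by
  intro h
  have hmem : u ∈ truncatedBall u ε := h ▸ mem_closedBall_zero_iff.2 hu.le
  have hle : |⟪u, u⟫| ≤ 1 - ε := hmem.2
  rw [real_inner_self_eq_norm_sq, hu, one_pow, abs_one] at hle
  linarith

namespace IsAdmissible

theorem one_sub_le_abs_inner (hadm : IsAdmissible Λ (truncatedBall u ε)) (hv : v ∈ Λ) (hv0 : v ≠ 0)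
    (hv1 : ‖v‖ < 1) : 1 - ε ≤ |⟪v, u⟫| := by
  by_contra! hlt
  exact hv0 (hadm ⟨hv, mem_interior_truncatedBall hv1 hlt⟩)

theorem one_sub_le_norm (hadm : IsAdmissible Λ (truncatedBall u ε)) (hu : ‖u‖ = 1) (hε : 0 ≤ ε)
    (hv : v ∈ Λ) (hv0 : v ≠ 0) : 1 - ε ≤ ‖v‖ := by
  rcases lt_or_ge ‖v‖ 1 with hv1 | hv1
  · simpa [hu] using (hadm.one_sub_le_abs_inner hv hv0 hv1).trans (abs_real_inner_le_norm v u)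
  · linarith

-- By the parallelogram law two points of one cap are too close to differ by a lattice vector.
theorem eq_of_le_inner (hadm : IsAdmissible Λ (truncatedBall u (1 / 10))) (hΛ : IsLattice Λ)
    (hu : ‖u‖ = 1) (hv : v ∈ Λ) (hw : w ∈ Λ) (hv1 : ‖v‖ < 1) (hw1 : ‖w‖ < 1)
    (hvu : 9 / 10 ≤ ⟪v, u⟫) (hwu : 9 / 10 ≤ ⟪w, u⟫) : v = w := by
  by_contra hne
  have hle := hadm.one_sub_le_norm hu (by norm_num) (hΛ.sub_mem hv hw) (sub_ne_zero.2 hne)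
  have hadd : 9 / 5 ≤ ‖v + w‖ := by
    have h := real_inner_le_norm (v + w) u
    rw [inner_add_left, hu, mul_one] at h
    linarith
  nlinarith [parallelogram_law_with_norm ℝ v w, norm_nonneg v, norm_nonneg w]

theorem eq_or_eq_neg_of_norm_lt_one (hadm : IsAdmissible Λ (truncatedBall u (1 / 10)))
    (hΛ : IsLattice Λ) (hu : ‖u‖ = 1) (hv : v ∈ Λ) (hw : w ∈ Λ) (hv0 : v ≠ 0) (hw0 : w ≠ 0)
    (hv1 : ‖v‖ < 1) (hw1 : ‖w‖ < 1) : v = w ∨ v = -w := by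
  have hsign {x : Euc n} (hx : x ∈ Λ) (hx0 : x ≠ 0) (hx1 : ‖x‖ < 1) :
      9 / 10 ≤ ⟪x, u⟫ ∨ 9 / 10 ≤ ⟪-x, u⟫ := by
    rw [inner_neg_left]
    exact le_abs.1 (by linarith [hadm.one_sub_le_abs_inner hx hx0 hx1])
  have hv1' : ‖-v‖ < 1 := (norm_neg v).trans_lt hv1
  have hw1' : ‖-w‖ < 1 := (norm_neg w).trans_lt hw1
  rcases hsign hv hv0 hv1 with hvu | hvu <;> rcases hsign hw hw0 hw1 with hwu | hwu
  · exact .inl (hadm.eq_of_le_inner hΛ hu hv hw hv1 hw1 hvu hwu)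
  · exact .inr (hadm.eq_of_le_inner hΛ hu hv (hΛ.neg_mem hw) hv1 hw1' hvu hwu)
  · exact .inr (neg_eq_iff_eq_neg.1
      (hadm.eq_of_le_inner hΛ hu (hΛ.neg_mem hv) hw hv1' hw1 hvu hwu))
  · exact .inl (neg_injective
      (hadm.eq_of_le_inner hΛ hu (hΛ.neg_mem hv) (hΛ.neg_mem hw) hv1' hw1' hvu hwu))

end IsAdmissible

end TruncatedBall

/-! ### Redundantly extreme critical lattices make the ball reducible -/

section Backward

variable {n : ℕ} {Λ : Set (Euc n)} {u : Euc n}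

theorem eventually_det_ne_zero :
    ∀ᶠ G : Euc n →L[ℝ] Euc n in 𝓝 1, G.det ≠ 0 :=
  ContinuousLinearMap.continuous_det.continuousAt.eventually_ne (by simp [ContinuousLinearMap.det])

theorem IsRedundantlyExtremeCfg.eventually_one_le_abs_det [NeZero n]
    (hΛ : IsCriticalLattice Λ (unitBall n)) (hS : IsRedundantlyExtremeCfg (minVecs Λ))
    (hu : ‖u‖ = 1) :
    ∀ᶠ G : Euc n →L[ℝ] Euc n in 𝓝 1,
      IsAdmissible (G '' Λ) (truncatedBall u (1 / 10)) → 1 ≤ |G.det| := by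
  have hfin := hΛ.1.finite_inter_sphere
  rw [hΛ.minVecs_eq, isRedundantlyExtremeCfg_iff hfin hΛ.1.neg_mem_inter_sphere] at hS
  have hunit (y : Euc n) (hy : y ∈ Λ ∩ sphere 0 1) : ‖y‖ = 1 := mem_sphere_zero_iff_norm.1 hy.2
  have hpairs : ∀ᶠ G : Euc n →L[ℝ] Euc n in 𝓝 1, ∀ x ∈ Λ ∩ sphere 0 1,
      (∀ y ∈ (Λ ∩ sphere 0 1) \ {x, -x}, 1 ≤ ‖G y‖) → 1 ≤ |G.det| :=
    (Filter.eventually_all_finite hfin).2 fun x hx =>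
      (hS.2 x hx).eventually_one_le_abs_det fun y hy => hunit y hy.1
  filter_upwards [hS.1.eventually_one_le_abs_det hunit, hpairs, eventually_det_ne_zero]
    with G hGall hGpair hG hadm
  by_cases hall : ∀ y ∈ Λ ∩ sphere 0 1, 1 ≤ ‖G y‖
  · exact hGall hall
  push Not at hall
  obtain ⟨x, hx, hGx⟩ := hall
  have hinj : Function.Injective G :=
    (LinearMap.equivOfDetNeZero (G : Euc n →ₗ[ℝ] Euc n) hG).injective
  have hne (y : Euc n) (hy : y ∈ Λ ∩ sphere 0 1) : G y ≠ 0 :=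
    (map_ne_zero_iff G hinj).2 (norm_ne_zero_iff.1 (by rw [hunit y hy]; exact one_ne_zero))
  refine hGpair x hx fun y hy => ?_
  by_contra! hGy
  refine hy.2 ?_
  rcases hadm.eq_or_eq_neg_of_norm_lt_one (hΛ.1.image hG) hu (Set.mem_image_of_mem G hy.1.1)
    (Set.mem_image_of_mem G hx.1) (hne y hy.1) (hne x hx) hGy hGx with h | h
  · exact .inl (hinj h)
  · exact .inr (hinj (h.trans (map_neg G x).symm))

theorem isAdmissible_unitBall_of_tendsto {G : ℕ → Euc n →L[ℝ] Euc n} {r : ℕ → ℝ}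
    (hG : Filter.Tendsto G Filter.atTop (𝓝 1)) (hr : Filter.Tendsto r Filter.atTop (𝓝 1))
    (hmin : ∀ k, ∀ v ∈ G k '' Λ, v ≠ 0 → r k ≤ ‖v‖) : IsAdmissible Λ (unitBall n) := by
  refine isAdmissible_unitBall_iff.2 fun v hv hv0 => ?_
  have hGv : Filter.Tendsto (fun k => G k v) Filter.atTop (𝓝 v) :=
    ((ContinuousLinearMap.apply ℝ (Euc n) v).continuous.tendsto 1).comp hG
  refine le_of_tendsto_of_tendsto hr hGv.norm ?_
  filter_upwards [hGv.eventually_ne hv0] with k hk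
  exact hmin k _ (Set.mem_image_of_mem _ hv) hk

theorem latDet_le_of_tendsto {G : ℕ → Euc n →L[ℝ] Euc n} {D : ℝ} (hΛ : IsLattice Λ)
    (hG : Filter.Tendsto G Filter.atTop (𝓝 1)) (hdet : ∀ k, latDet (G k '' Λ) ≤ D) :
    latDet Λ ≤ D := by
  have hlim : Filter.Tendsto (fun k => |(G k).det| * latDet Λ) Filter.atTop (𝓝 (latDet Λ)) := by
    have h := ((ContinuousLinearMap.continuous_det.tendsto _).comp hG).abs.mul_const (latDet Λ)
    simpa [ContinuousLinearMap.det] using h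
  refine le_of_tendsto hlim ?_
  filter_upwards [hG.eventually eventually_det_ne_zero] with k hk
  exact (hΛ.latDet_image hk).symm.trans_le (hdet k)

theorem exists_isAdmissible_unitBall (n : ℕ) :
    ∃ Λ : Set (Euc n), IsLattice Λ ∧ IsAdmissible Λ (unitBall n) := by
  refine ⟨latticeSet LinearMap.id, ⟨LinearMap.id, by simp, rfl⟩, isAdmissible_unitBall_iff.2 ?_⟩
  rintro _ ⟨z, rfl⟩ hz
  obtain ⟨i, hi⟩ : ∃ i, z i ≠ 0 := by
    by_contra! h
    simp [h] at hz
  calc (1 : ℝ) ≤ |(z i : ℝ)| := mod_cast Int.one_le_abs hi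
    _ = ‖(LinearMap.id (∑ j, (z j : ℝ) • EuclideanSpace.single j 1) : Euc n) i‖ := by
      simp [Pi.single_apply]
    _ ≤ _ := PiLp.norm_apply_le _ i

theorem exists_frequently_abs_det_lt_one (hu : ‖u‖ = 1)
    (h : ∀ ε, 0 < ε → ε < 1 → critDet (truncatedBall u ε) < critDet (unitBall n)) :
    ∃ Λ, IsCriticalLattice Λ (unitBall n) ∧ ∃ᶠ G : Euc n →L[ℝ] Euc n in 𝓝 1,
      IsAdmissible (G '' Λ) (truncatedBall u (1 / 10)) ∧ |G.det| < 1 := by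
  obtain ⟨Λ₀, hΛ₀, hadm₀⟩ := exists_isAdmissible_unitBall n
  let ε (k : ℕ) : ℝ := 1 / 10 * (1 / (k + 1))
  have hε0 (k : ℕ) : 0 < ε k := by positivity
  have hε1 (k : ℕ) : ε k ≤ 1 / 10 :=
    mul_le_of_le_one_right (by norm_num) (div_le_one_of_le₀ (by simp) (by positivity))
  have hεlim : Filter.Tendsto (fun k => 1 - ε k) Filter.atTop (𝓝 1) := by
    have hinv := tendsto_one_div_add_atTop_nhds_zero_nat (𝕜 := ℝ)
    simpa only [mul_zero, sub_zero] using (hinv.const_mul (1 / 10)).const_sub 1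
  choose Λ' hΛ' hadm hdet using fun k =>
    exists_latDet_lt hΛ₀ (hadm₀.mono (truncatedBall_subset_unitBall u (ε k)))
      (h (ε k) (hε0 k) (by linarith [hε1 k]))
  obtain ⟨φ, hφ, Λ, G, hΛ, hGΛ, hG⟩ := mahler_compactness (r := 9 / 10) (by norm_num) hΛ'
    (fun k v hv hv0 => by linarith [hε1 k, (hadm k).one_sub_le_norm hu (hε0 k).le hv hv0])
    fun k => (hdet k).le
  have hadmΛ : IsAdmissible Λ (unitBall n) :=
    isAdmissible_unitBall_of_tendsto hG (hεlim.comp hφ.tendsto_atTop) fun k v hv hv0 =>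
      (hadm (φ k)).one_sub_le_norm hu (hε0 _).le (hGΛ k ▸ hv) hv0
  have hdetΛ : latDet Λ = critDet (unitBall n) :=
    (latDet_le_of_tendsto hΛ hG fun k => hGΛ k ▸ (hdet (φ k)).le).antisymm
      (critDet_le_latDet hΛ hadmΛ)
  refine ⟨Λ, ⟨hΛ, hadmΛ, hdetΛ⟩, hG.frequently (Filter.Eventually.frequently ?_)⟩
  filter_upwards [hG.eventually eventually_det_ne_zero] with k hk
  refine ⟨hGΛ k ▸ (hadm (φ k)).mono (truncatedBall_anti u (hε1 _)), ?_⟩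
  have hlt : |(G k).det| * latDet Λ < latDet Λ := by
    rw [← hΛ.latDet_image hk, hGΛ, hdetΛ]
    exact hdet (φ k)
  exact (mul_lt_iff_lt_one_left hΛ.latDet_pos).1 hlt

theorem isReducible_unitBall_of_forall_isRedundantlyExtremeCfg [NeZero n]
    (h : ∀ Λ, IsCriticalLattice Λ (unitBall n) → IsRedundantlyExtremeCfg (minVecs Λ)) :
    IsReducible (unitBall n) := by
  obtain ⟨u, hu⟩ : ∃ u : Euc n, ‖u‖ = 1 := ⟨EuclideanSpace.single 0 1, by simp⟩
  by_contra hirred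
  obtain ⟨Λ, hΛ, hfreq⟩ := exists_frequently_abs_det_lt_one hu fun ε hε0 hε1 => by
    obtain ⟨Λ₀, hΛ₀, hadm₀⟩ := exists_isAdmissible_unitBall n
    refine (critDet_mono hΛ₀ hadm₀ (truncatedBall_subset_unitBall u ε)).lt_of_ne fun heq => ?_
    exact hirred ⟨_, isSymCB_truncatedBall u hε1, truncatedBall_subset_unitBall u ε,
      truncatedBall_ne_unitBall hu hε0, heq⟩
  obtain ⟨G, ⟨hadm, hlt⟩, hge⟩ :=
    (hfreq.and_eventually ((h Λ hΛ).eventually_one_le_abs_det hΛ hu)).exists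
  exact (hge hadm).not_gt hlt

end Backward

theorem ball_reducible_iff_redundantly_extreme_general (n : ℕ) [NeZero n] :
    IsReducible (unitBall n) ↔
      ∀ Λ, IsCriticalLattice Λ (unitBall n) → IsRedundantlyExtremeCfg (minVecs Λ) :=
  ⟨fun h _ hΛ => h.isRedundantlyExtremeCfg_minVecs hΛ,
    isReducible_unitBall_of_forall_isRedundantlyExtremeCfg⟩

/-- Theorem 3.5: if the critical lattice `Λ` of `Bⁿ` is unique up to
rotation, then `Bⁿ` is reducible iff `S(Λ)` is redundantly extreme. -/
theorem ball_reducible_iff_redundantly_extreme (n : ℕ) (hn : 2 ≤ n) (Λ : Set (Euc n))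
    (hcrit : IsCriticalLattice Λ (unitBall n))
    (huniq : ∀ Λ' : Set (Euc n), IsCriticalLattice Λ' (unitBall n) →
      ∃ U : Euc n ≃ₗᵢ[ℝ] Euc n, Λ' = ⇑U '' Λ)
    (hmin : minNorm Λ = 1) :
    (∃ K : Set (Euc n), IsSymCB K ∧ K ⊆ unitBall n ∧ K ≠ unitBall n ∧
        critDet K = critDet (unitBall n)) ↔
      (IsExtremeCfg (minVecs Λ) ∧
        ∀ x ∈ minVecs Λ, IsExtremeCfg (minVecs Λ \ {x, -x})) := by
  have : NeZero n := ⟨by omega⟩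
  exact (ball_reducible_iff_redundantly_extreme_general n).trans
    (forall_isCriticalLattice_isRedundantlyExtremeCfg_iff hcrit huniq)

end
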